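/- Let G be a finite group acting continuously on a sphere S^n such that the action has periodic isotropy: for every point x of S^n, the stabilizer subgroup G_x has the property that every subgroup of G_x of order p^2 is cyclic, for every prime p. Then the rank of G is at most 2; that is, for every prime p, G contains no subgroup isomorphic to the elementary abelian group (ℤ/p)^3. -/

import Mathlib

/-! Suppose that `Q = (ℤ/p)³` acts on a sphere such that no stabilizer contains two independent
elements. The proof works with ordered chains, augmented by the empty simplex, whose simplices are
small: all their vertices are close to each other, and remain so under `Q`. As the scale tends to
zero, these chains have at most the homology of a sphere, uniformly in the coefficient ring
(`isSpherical_sphere`, by the Mayer-Vietoris argument and induction on the dimension).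

Let `K` be an algebraic closure of `𝔽_p`, and choose `θ` in `K` that satisfies no nontrivial
quadratic equation over `𝔽_p`. Let `u 0`, `u 1`, `u 2` be the standard basis of `Q`. For parameters
`b`, `c` put `α = (θ b + θ² c, b, c)` and consider the operator `t = ∑ i, α i (u i - 1)` on chains.
It commutes with the boundary, and `t ^ p = 0`. Thus `1 + t` generates a cyclic shifted subgroup of
the group algebra, and two facts about `t` contradict each other.

* For each height and scale, some `(b, c) ≠ (0, 0)` has a tower: chains `x 1, x 2, …` such that
  `bd (x 1)` is the empty simplex and `bd (x (i + 1))` is alternately `t (x i)` and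
  `t ^ (p - 1) (x i)` (`tower_high`). The prescribed boundary is always a cycle, so the construction
  can be obstructed in one degree only. If it is carried out over the ring `K[b, c]`, the
  obstruction is the value of a polynomial `a` in `b` and `c`. At the origin `t` vanishes, so
  the multiple of the fundamental cycle given by the value of `a` there is a boundary. A polynomial
  in two variables over an algebraically closed field takes no value at exactly one point, so `a`
  takes its value at the origin also at some other point, and there the tower continues.
  Above the critical degree nothing obstructs it.

* On the other hand, there is an equivariant chain map from small chains to chains that vanish in
  all large degrees: map each point to a nearby point of one of finitely many orbits, numbered by
  labels, and sort the vertices of simplices by their labels (`exists_retraction`, `sortMap`).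
  Each stabilizer lies in a line `𝔽_p h`, and by the choice of `θ` there is a character which
  vanishes on `h` but not on `∑ i, α i (u i)` (`exists_chr`). These characters yield an operator `D`
  on the chains in nonnegative degrees with `D t - t D = 1` (`exists_weyl`), hence the kernel of
  `t ^ q` is the image of `t ^ (p - q)` for all `q ≤ p` (`weyl_exact`, `chShift_exact`). By a
  descending induction, a tower with top term zero in such a complex would have a first term whose
  boundary is zero (`no_tower`).

So some stabilizer contains two independent elements. They generate a group of order `p ^ 2` that
is not cyclic.
-/

/-- The group of self-homeomorphisms of a topological space,
with `(f * g) x = f (g x)`. -/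
instance homeomorphGroup {X : Type*} [TopologicalSpace X] : Group (X ≃ₜ X) where
  mul f g := g.trans f
  one := Homeomorph.refl X
  inv := Homeomorph.symm
  mul_assoc _ _ _ := Homeomorph.ext fun _ => rfl
  one_mul _ := Homeomorph.ext fun _ => rfl
  mul_one _ := Homeomorph.ext fun _ => rfl
  inv_mul_cancel f := Homeomorph.ext fun x => f.symm_apply_apply x

namespace PeriodicIsotropy

open Finsupp

/-! ### Ordered chains -/

/-- Ordered chains with coefficients in `R` and vertices in `V`, all degrees together. A basis is
given by the finite lists of vertices. The empty list is a generator in degree `-1`, so that the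
complex is the augmented one; a list of length `k` has degree `k - 1`. -/
abbrev Ch (R V : Type) [CommRing R] := List V →₀ R

section Chains

variable {R : Type} [CommRing R] {V W : Type}

theorem map_mem_of_supported {M : Type} [AddCommGroup M] [Module R M] {Ω : Type} {S : Set Ω}
    {N : Submodule R M} (F : (Ω →₀ R) →ₗ[R] M) (h : ∀ l ∈ S, F (single l 1) ∈ N)
    {c : Ω →₀ R} (hc : c ∈ supported R R S) : F c ∈ N := by
  rw [supported_eq_span_single] at hc
  have : Submodule.span R ((fun i => single i (1 : R)) '' S) ≤ N.comap F := by
    rw [Submodule.span_le]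
    rintro _ ⟨l, hl, rfl⟩
    exact h l hl
  exact this hc

theorem eq_of_supported {M : Type} [AddCommGroup M] [Module R M] {Ω : Type} {S : Set Ω}
    (F G : (Ω →₀ R) →ₗ[R] M) (h : ∀ l ∈ S, F (single l 1) = G (single l 1))
    {c : Ω →₀ R} (hc : c ∈ supported R R S) : F c = G c := by
  have := map_mem_of_supported (N := ⊥) (F - G) (by
    intro l hl; simp [h l hl]) hc
  simpa [sub_eq_zero] using this

theorem ext_single {M : Type} [AddCommGroup M] [Module R M] {Ω : Type}
    {F G : (Ω →₀ R) →ₗ[R] M} (h : ∀ l, F (single l 1) = G (single l 1)) : F = G := by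
  apply lhom_ext'
  intro l
  apply LinearMap.ext_ring
  exact h l

/-- The operator on chains that adds a first vertex `a`. -/
noncomputable def cone (a : V) : Ch R V →ₗ[R] Ch R V := lmapDomain R R (List.cons a)

@[simp] theorem cone_single (a : V) (l : List V) (r : R) :
    cone a (single l r) = single (a :: l) r := by
  simp [cone]

/-- The boundary of a single ordered simplex, that is, the alternating sum of its faces. -/
noncomputable def bdL : List V → Ch R V
  | [] => 0
  | a :: l => single l 1 - cone a (bdL l)

/-- The boundary operator. -/
noncomputable def bd : Ch R V →ₗ[R] Ch R V := linearCombination R bdL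

@[simp] theorem bd_single (l : List V) : bd (single l (1 : R)) = bdL l := by
  simp [bd]

theorem bd_cone (a : V) (c : Ch R V) : bd (cone a c) = c - cone a (bd c) := by
  have : bd ∘ₗ cone a = LinearMap.id - cone (R := R) a ∘ₗ bd := by
    apply ext_single
    intro l
    simp [bdL]
  exact LinearMap.congr_fun this c

theorem bd_bd (c : Ch R V) : bd (bd c) = 0 := by
  have : bd ∘ₗ bd = (0 : Ch R V →ₗ[R] Ch R V) := by
    apply ext_single
    intro l
    simp only [LinearMap.comp_apply, bd_single, LinearMap.zero_apply]
    induction l with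
    | nil => simp [bdL]
    | cons a l ih => simp [bdL, bd_cone, ih]
  exact LinearMap.congr_fun this c

/-- The chain map induced by a map of vertices. -/
noncomputable def mp (f : V → W) : Ch R V →ₗ[R] Ch R W := lmapDomain R R (List.map f)

@[simp] theorem mp_single (f : V → W) (l : List V) (r : R) :
    mp f (single l r) = single (l.map f) r := by
  simp [mp]

theorem mp_cone (f : V → W) (a : V) (c : Ch R V) : mp f (cone a c) = cone (f a) (mp f c) := by
  have : mp f ∘ₗ cone a = cone (R := R) (f a) ∘ₗ mp f := by
    apply ext_single
    intro l
    simp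
  exact LinearMap.congr_fun this c

theorem bd_mp (f : V → W) (c : Ch R V) : bd (mp f c) = mp f (bd c) := by
  have : bd ∘ₗ mp f = mp (R := R) f ∘ₗ bd := by
    apply ext_single
    intro l
    simp only [LinearMap.comp_apply, bd_single, mp_single]
    induction l with
    | nil => simp [bdL]
    | cons a l ih => simp [bdL, mp_cone, ih]
  exact LinearMap.congr_fun this c

/-- The prism over a single simplex, between its images under `f` and `g`. -/
noncomputable def prismL (f g : V → W) : List V → Ch R W
  | [] => 0
  | a :: l => single (f a :: g a :: l.map g) 1 - cone (f a) (prismL f g l)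

/-- The prism operator, a chain homotopy between the maps induced by `f` and `g`. -/
noncomputable def prism (f g : V → W) : Ch R V →ₗ[R] Ch R W := linearCombination R (prismL f g)

@[simp] theorem prism_single (f g : V → W) (l : List V) :
    prism f g (single l (1 : R)) = prismL f g l := by
  simp [prism]

theorem prism_cone (f g : V → W) (a : V) (c : Ch R V) :
    prism f g (cone a c) = cone (f a) (cone (g a) (mp g c)) - cone (f a) (prism f g c) := by
  have : prism f g ∘ₗ cone a =
      cone (R := R) (f a) ∘ₗ cone (g a) ∘ₗ mp g - cone (f a) ∘ₗ prism f g := by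
    apply ext_single
    intro l
    simp [prismL]
  exact LinearMap.congr_fun this c

theorem bd_prism (f g : V → W) (c : Ch R V) :
    bd (prism f g c) = mp g c - mp f c - prism f g (bd c) := by
  have : bd ∘ₗ prism f g = mp (R := R) g - mp f - prism f g ∘ₗ bd := by
    apply ext_single
    intro l
    simp only [LinearMap.comp_apply, bd_single, mp_single, LinearMap.sub_apply, prism_single]
    induction l with
    | nil => simp [bdL, prismL]
    | cons a l ih =>
      have e : single (f a :: g a :: l.map g) (1 : R)
          = cone (f a) (cone (g a) (single (l.map g) 1)) := by simp
      simp only [prismL, bdL, e, map_sub, bd_cone, ih, prism_cone, List.map_cons, prism_single,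
        bd_single, ← cone_single, ← mp_single, bd_mp]
      abel
  exact LinearMap.congr_fun this c

/-- The chains all of whose simplices have their vertices pairwise related by `r`, each vertex
being also related to itself. -/
def cl (R : Type) [CommRing R] (r : V → V → Prop) : Submodule R (Ch R V) :=
  supported R R {l : List V | ∀ x ∈ l, ∀ y ∈ l, r x y}

theorem cl_mono {r s : V → V → Prop} (h : ∀ x y, r x y → s x y) : cl R r ≤ cl R s :=
  supported_mono fun _ hl x hx y hy => h x y (hl x hx y hy)

theorem single_mem_cl {r : V → V → Prop} {l : List V} (a : R)
    (h : ∀ x ∈ l, ∀ y ∈ l, r x y) : single l a ∈ cl R r :=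
  single_mem_supported R a h

theorem cone_mem_cl {r s : V → V → Prop} {a : V} (h : s a a)
    (hr : ∀ x, r x x → s a x ∧ s x a) (hrs : ∀ x y, r x y → s x y) {c : Ch R V}
    (hc : c ∈ cl R r) : cone a c ∈ cl R s := by
  refine map_mem_of_supported _ ?_ hc
  intro l hl
  rw [cone_single]
  apply single_mem_cl
  intro x hx y hy
  rw [List.mem_cons] at hx hy
  rcases hx with rfl | hx <;> rcases hy with rfl | hy
  · exact h
  · exact (hr _ (hl _ hy _ hy)).1
  · exact (hr _ (hl _ hx _ hx)).2
  · exact hrs _ _ (hl _ hx _ hy)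

theorem bdL_mem (l : List V) : (bdL l : Ch R V) ∈ supported R R {l' | ∀ x ∈ l', x ∈ l} := by
  induction l with
  | nil => simp [bdL]
  | cons a l ih =>
    refine Submodule.sub_mem _ (single_mem_supported R _ ?_) (map_mem_of_supported _ ?_ ih)
    · intro x hx; exact List.mem_cons_of_mem _ hx
    · intro l' hl'
      rw [cone_single]
      refine single_mem_supported R _ ?_
      intro x hx
      rw [List.mem_cons] at hx ⊢
      exact hx.imp_right (hl' x)

theorem bd_mem_cl {r : V → V → Prop} {c : Ch R V} (hc : c ∈ cl R r) : bd c ∈ cl R r := by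
  refine map_mem_of_supported _ ?_ hc
  intro l hl
  rw [bd_single]
  refine supported_mono (fun l' hl' => ?_) (bdL_mem l)
  intro x hx y hy
  exact hl x (hl' x hx) y (hl' y hy)

theorem mp_mem_cl {r : V → V → Prop} {s : W → W → Prop} {f : V → W}
    (h : ∀ x y, r x y → s (f x) (f y)) {c : Ch R V} (hc : c ∈ cl R r) : mp f c ∈ cl R s := by
  refine map_mem_of_supported _ ?_ hc
  intro l hl
  rw [mp_single]
  apply single_mem_cl
  simp only [List.mem_map]
  rintro _ ⟨x, hx, rfl⟩ _ ⟨y, hy, rfl⟩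
  exact h _ _ (hl _ hx _ hy)

theorem prismL_mem (f g : V → W) (l : List V) :
    (prismL f g l : Ch R W) ∈ supported R R {l' | ∀ x ∈ l', ∃ y ∈ l, x = f y ∨ x = g y} := by
  induction l with
  | nil => simp [prismL]
  | cons a l ih =>
    refine Submodule.sub_mem _ (single_mem_supported R _ ?_) (map_mem_of_supported _ ?_ ih)
    · intro x hx
      simp only [List.mem_cons, List.mem_map] at hx ⊢
      rcases hx with rfl | rfl | ⟨y, hy, rfl⟩
      · exact ⟨a, by simp⟩
      · exact ⟨a, by simp⟩
      · exact ⟨y, by simp [hy]⟩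
    · intro l' hl'
      rw [cone_single]
      refine single_mem_supported R _ ?_
      intro x hx
      rw [List.mem_cons] at hx
      rcases hx with rfl | hx
      · exact ⟨a, by simp⟩
      · obtain ⟨y, hy, h⟩ := hl' x hx
        exact ⟨y, List.mem_cons_of_mem _ hy, h⟩

theorem prism_mem_cl {r : V → V → Prop} {s : W → W → Prop} {f g : V → W}
    (h : ∀ x y, r x y → s (f x) (f y) ∧ s (f x) (g y) ∧ s (g x) (f y) ∧ s (g x) (g y))
    {c : Ch R V} (hc : c ∈ cl R r) : prism f g c ∈ cl R s := by
  refine map_mem_of_supported _ ?_ hc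
  intro l hl
  rw [prism_single]
  refine supported_mono (fun l' hl' x hx y hy => ?_) (prismL_mem f g l)
  obtain ⟨x', hx', hx⟩ := hl' x hx
  obtain ⟨y', hy', hy⟩ := hl' y hy
  have := h x' y' (hl _ hx' _ hy')
  rcases hx with rfl | rfl <;> rcases hy with rfl | rfl <;> tauto

/-- The chains that are homogeneous of length `k`, that is, of degree `k - 1`. -/
def hom (R : Type) [CommRing R] (V : Type) (k : ℕ) : Submodule R (Ch R V) :=
  supported R R {l : List V | l.length = k}

/-- The projection of a chain to its component of length `k`. -/
noncomputable def pr (k : ℕ) : Ch R V →ₗ[R] Ch R V :=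
  linearCombination R fun l => if l.length = k then single l 1 else 0

theorem pr_single (k : ℕ) (l : List V) :
    pr k (single l (1 : R)) = if l.length = k then single l 1 else 0 := by
  simp [pr]

theorem pr_mem_hom (k : ℕ) (c : Ch R V) : pr k c ∈ hom R V k := by
  refine map_mem_of_supported (S := Set.univ) _ ?_ (by simp)
  intro l _
  rw [pr_single]
  split_ifs with h
  · exact single_mem_supported R _ h
  · exact zero_mem _

theorem pr_mem_supported {S : Set (List V)} (k : ℕ) {c : Ch R V} (hc : c ∈ supported R R S) :
    pr k c ∈ supported R R S := by
  refine map_mem_of_supported _ ?_ hc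
  intro l hl
  rw [pr_single]
  split_ifs with h
  · exact single_mem_supported R _ hl
  · exact zero_mem _

theorem pr_mem_cl {r : V → V → Prop} (k : ℕ) {c : Ch R V} (hc : c ∈ cl R r) : pr k c ∈ cl R r :=
  pr_mem_supported k hc

theorem pr_of_mem {k : ℕ} {c : Ch R V} (hc : c ∈ hom R V k) : pr k c = c := by
  refine eq_of_supported (pr k) LinearMap.id ?_ hc
  intro l hl
  have : l.length = k := hl
  simp [pr_single, this]

theorem pr_of_mem_ne {k j : ℕ} (hkj : j ≠ k) {c : Ch R V} (hc : c ∈ hom R V k) : pr j c = 0 := by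
  refine eq_of_supported (pr j) 0 ?_ hc
  intro l hl
  have : l.length = k := hl
  simp [pr_single, this, hkj.symm]

theorem cone_mem_hom {a : V} {k : ℕ} {c : Ch R V} (hc : c ∈ hom R V k) :
    cone a c ∈ hom R V (k + 1) := by
  refine map_mem_of_supported _ ?_ hc
  intro l hl
  rw [cone_single]
  refine single_mem_supported R _ ?_
  have : l.length = k := hl
  simp [this]

theorem mp_mem_hom (f : V → W) {k : ℕ} {c : Ch R V} (hc : c ∈ hom R V k) :
    mp f c ∈ hom R W k := by
  refine map_mem_of_supported _ ?_ hc
  intro l hl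
  rw [mp_single]
  refine single_mem_supported R _ ?_
  have : l.length = k := hl
  simp [this]

theorem bdL_mem_hom (l : List V) {k : ℕ} (h : l.length = k + 1) : (bdL l : Ch R V) ∈ hom R V k := by
  induction l generalizing k with
  | nil => simp at h
  | cons a l ih =>
    have h' : l.length = k := by simpa using h
    refine Submodule.sub_mem _ (single_mem_supported R _ h') ?_
    cases k with
    | zero =>
      have : l = [] := by simpa using h'
      subst this
      simp [bdL]
    | succ k => exact cone_mem_hom (ih h')

theorem bd_mem_hom {k : ℕ} {c : Ch R V} (hc : c ∈ hom R V (k + 1)) : bd c ∈ hom R V k := by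
  refine map_mem_of_supported _ ?_ hc
  intro l hl
  rw [bd_single]
  exact bdL_mem_hom l hl

theorem bd_pr (k : ℕ) (c : Ch R V) : bd (pr (k + 1) c) = pr k (bd c) := by
  have : bd ∘ₗ pr (k + 1) = pr (R := R) (V := V) k ∘ₗ bd := by
    apply ext_single
    intro l
    simp only [LinearMap.comp_apply, bd_single, pr_single]
    split_ifs with h
    · rw [bd_single, pr_of_mem (bdL_mem_hom l h)]
    · rcases Nat.eq_zero_or_eq_succ_pred l.length with h0 | h0
      · have : l = [] := by simpa using h0
        subst this
        simp [bdL]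
      · rw [map_zero, pr_of_mem_ne (k := l.length - 1) (by omega)
          (bdL_mem_hom l (by omega))]
  exact LinearMap.congr_fun this c

/-- Change of coefficients. -/
noncomputable def cf {R' : Type} [CommRing R'] (f : R →+* R') : Ch R V →+ Ch R' V :=
  mapRange.addMonoidHom f.toAddMonoidHom

section Coefficients

variable {R' : Type} [CommRing R'] (f : R →+* R')

@[simp] theorem cf_single (l : List V) (a : R) : cf f (single l a) = single l (f a) := by
  simp [cf]

theorem cf_smul (a : R) (c : Ch R V) : cf f (a • c) = f a • cf f c := by
  ext l
  simp [cf]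

theorem cf_mem_supported {S : Set (List V)} {c : Ch R V} (hc : c ∈ supported R R S) :
    cf f c ∈ supported R' R' S := by
  rw [mem_supported] at hc ⊢
  intro l hl
  refine hc ?_
  simp only [Finset.mem_coe, mem_support_iff] at hl ⊢
  intro h
  exact hl (by simp [cf, h])

/-- Two semilinear maps that agree on simplices are equal. -/
theorem cf_ext {F : Ch R V →ₗ[R] Ch R W} {F' : Ch R' V →ₗ[R'] Ch R' W}
    (h : ∀ l, cf f (F (single l 1)) = F' (single l 1)) (c : Ch R V) : cf f (F c) = F' (cf f c) := by
  induction c using Finsupp.induction_linear with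
  | zero => simp
  | add c d hc hd => simp [hc, hd]
  | single l a =>
    have e : single l a = a • single l (1 : R) := by simp
    rw [e, map_smul, cf_smul, cf_smul, h, map_smul, cf_single, map_one]

theorem cf_cone (a : V) (c : Ch R V) : cf f (cone a c) = cone a (cf f c) :=
  cf_ext f (fun l => by simp) c

theorem cf_bd (c : Ch R V) : cf f (bd c) = bd (cf f c) := by
  refine cf_ext f (fun l => ?_) c
  simp only [bd_single]
  induction l with
  | nil => simp [bdL]
  | cons a l ih => simp [bdL, cf_cone, ih]

theorem cf_mp (g : V → W) (c : Ch R V) : cf f (mp g c) = mp g (cf f c) :=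
  cf_ext f (fun l => by simp) c

theorem cf_cf {R'' : Type} [CommRing R''] (g : R' →+* R'') (c : Ch R V) :
    cf g (cf f c) = cf (g.comp f) c := by
  ext l
  simp [cf]

end Coefficients

end Chains

/-! ### The homology of spheres at small scales -/

/-- `IsSpherical r k` says that the simplices which are small for the relation `r ε` have, as
`ε → 0`, at most the reduced homology of a sphere of dimension `k - 1`: up to a loss of scale, every
cycle is homologous to a multiple of one integral cycle `z`, homogeneous of length `k`. The scales
and the cycle `z` do not depend on the coefficients. -/
def IsSpherical {V : Type} (r : ℝ → V → V → Prop) (k : ℕ) : Prop :=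
  ∀ ε > 0, ∃ δ > 0, ∃ z : Ch ℤ V, z ∈ cl ℤ (r ε) ∧ z ∈ hom ℤ V k ∧ bd z = 0 ∧
    ∀ (R : Type) [CommRing R] (c : Ch R V), c ∈ cl R (r δ) → bd c = 0 →
      ∃ a : R, ∃ e ∈ cl R (r ε), c = a • cf (Int.castRingHom R) z + bd e

/-- Two points of `A` at distance less than `ε`. -/
def near {V : Type} [PseudoMetricSpace V] (A : Set V) (ε : ℝ) (x y : V) : Prop :=
  x ∈ A ∧ y ∈ A ∧ dist x y < ε

theorem cl_near_mono {R : Type} [CommRing R] {V : Type} [PseudoMetricSpace V] {A B : Set V}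
    {ε δ : ℝ} (hAB : A ⊆ B) (h : ε ≤ δ) : cl R (near A ε) ≤ cl R (near B δ) :=
  cl_mono fun _ _ hxy => ⟨hAB hxy.1, hAB hxy.2.1, hxy.2.2.trans_le h⟩

/-- Homotopic maps induce the same map in homology: the time interval is cut into short steps, and
each step is a prism. -/
theorem homotopy {V : Type} [PseudoMetricSpace V] {A B : Set V} {H : ℝ → V → V}
    (hB : ∀ s ∈ Set.Icc (0 : ℝ) 1, ∀ x ∈ A, H s x ∈ B)
    (hU : UniformContinuousOn (fun q : ℝ × V => H q.1 q.2) (Set.Icc (0 : ℝ) 1 ×ˢ A))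
    {ε : ℝ} (hε : 0 < ε) : ∃ δ > 0, ∀ (R : Type) [CommRing R] (c : Ch R V),
      c ∈ cl R (near A δ) → mp (H 1) c ∈ cl R (near B ε) ∧
        (bd c = 0 → ∃ e ∈ cl R (near B ε), mp (H 1) c - mp (H 0) c = bd e) := by
  obtain ⟨δ, hδ, h⟩ := Metric.uniformContinuousOn_iff.1 hU ε hε
  have key : ∀ s ∈ Set.Icc (0 : ℝ) 1, ∀ s' ∈ Set.Icc (0 : ℝ) 1, |s - s'| < δ →
      ∀ x y, near A δ x y → near B ε (H s x) (H s' y) := by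
    intro s hs s' hs' hss x y hxy
    refine ⟨hB s hs x hxy.1, hB s' hs' y hxy.2.1, h (s, x) ⟨hs, hxy.1⟩ (s', y) ⟨hs', hxy.2.1⟩ ?_⟩
    rw [Prod.dist_eq]
    exact max_lt (by rwa [Real.dist_eq]) hxy.2.2
  refine ⟨δ, hδ, fun R _ c hc => ⟨?_, fun hbd => ?_⟩⟩
  · exact mp_mem_cl (key 1 (by simp) 1 (by simp) (by simpa)) hc
  obtain ⟨M, hM⟩ := exists_nat_gt (1 / δ)
  have hMpos : (0 : ℝ) < M := lt_trans (by positivity) hM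
  refine ⟨∑ j ∈ Finset.range M, prism (H (j / M)) (H ((j + 1 : ℕ) / M)) c, ?_, ?_⟩
  · refine Submodule.sum_mem _ fun j hj => ?_
    have hj' : (j + 1 : ℝ) ≤ M := by
      exact_mod_cast Finset.mem_range.1 hj
    have h1 : (j / M : ℝ) ∈ Set.Icc (0 : ℝ) 1 :=
      ⟨by positivity, (div_le_one hMpos).2 (by linarith)⟩
    have h2 : ((j + 1 : ℕ) / M : ℝ) ∈ Set.Icc (0 : ℝ) 1 :=
      ⟨by positivity, (div_le_one hMpos).2 (by push_cast; linarith)⟩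
    have h3 : |(j / M : ℝ) - ((j + 1 : ℕ) / M : ℝ)| < δ := by
      have : (j / M : ℝ) - ((j + 1 : ℕ) / M : ℝ) = - (1 / M) := by
        push_cast; field_simp; ring
      rw [this, abs_neg, abs_of_pos (by positivity)]
      rw [div_lt_iff₀ hδ] at hM
      rw [div_lt_iff₀ hMpos]
      linarith
    refine prism_mem_cl (fun x y hxy => ⟨?_, ?_, ?_, ?_⟩) hc
    · exact key _ h1 _ h1 (by simpa) x y hxy
    · exact key _ h1 _ h2 h3 x y hxy
    · exact key _ h2 _ h1 (by rwa [abs_sub_comm]) x y hxy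
    · exact key _ h2 _ h2 (by simpa) x y hxy
  · rw [map_sum]
    simp only [bd_prism, hbd, map_zero, sub_zero]
    rw [Finset.sum_range_sub (fun j : ℕ => mp (H (j / M)) c)]
    simp [hMpos.ne']

theorem mp_eq_self {R : Type} [CommRing R] {V : Type} {r : V → V → Prop} {f : V → V}
    (h : ∀ x, r x x → f x = x) {c : Ch R V} (hc : c ∈ cl R r) : mp f c = c := by
  refine eq_of_supported (mp f) LinearMap.id ?_ hc
  intro l hl
  simp only [mp_single, LinearMap.id_apply]
  congr 1
  conv_rhs => rw [← List.map_id l]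
  exact List.map_congr_left fun x hx => h x (hl x hx x hx)

section Sphere

variable {V : Type} [NormedAddCommGroup V] [InnerProductSpace ℝ V]

/-- Radial projection to the unit sphere. -/
noncomputable def radial (y : V) : V := ‖y‖⁻¹ • y

theorem norm_radial {y : V} (hy : y ≠ 0) : ‖radial y‖ = 1 := by
  rw [radial, norm_smul, norm_inv, norm_norm, inv_mul_cancel₀ (norm_ne_zero_iff.2 hy)]

theorem radial_of_norm {y : V} (hy : ‖y‖ = 1) : radial y = y := by
  simp [radial, hy]

theorem radial_uniform {A : Set V} (hA : IsCompact A) {F : ℝ × V → V} (hF : Continuous F)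
    (h : ∀ s ∈ Set.Icc (0 : ℝ) 1, ∀ x ∈ A, F (s, x) ≠ 0) :
    UniformContinuousOn (fun q : ℝ × V => radial (F q)) (Set.Icc (0 : ℝ) 1 ×ˢ A) := by
  apply (isCompact_Icc.prod hA).uniformContinuousOn_of_continuous
  unfold radial
  refine ContinuousOn.smul (ContinuousOn.inv₀ hF.norm.continuousOn ?_) hF.continuousOn
  rintro ⟨s, x⟩ ⟨hs, hx⟩
  exact norm_ne_zero_iff.2 (h s hs x hx)

/-- The unit sphere of a subspace. -/
def sph (U : Submodule ℝ V) : Set V := {x | x ∈ U ∧ ‖x‖ = 1}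

/-- A neighbourhood in the unit sphere of `U` of the closed hemisphere with pole `N`. -/
def cap (U : Submodule ℝ V) (N : V) : Set V := {x | x ∈ sph U ∧ -(1 / 2) ≤ inner ℝ N x}

variable [FiniteDimensional ℝ V]

theorem isCompact_sph (U : Submodule ℝ V) : IsCompact (sph U) := by
  have : sph U = (U : Set V) ∩ Metric.sphere 0 1 := by
    ext x; simp [sph]
  rw [this]
  exact (isCompact_sphere (0 : V) 1).inter_left U.closed_of_finiteDimensional

theorem isCompact_cap (U : Submodule ℝ V) (N : V) : IsCompact (cap U N) := by
  have : cap U N = sph U ∩ {x | -(1 / 2) ≤ inner ℝ N x} := rfl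
  rw [this]
  exact (isCompact_sph U).inter_right (isClosed_le continuous_const (by fun_prop))

/-- A cap is acyclic, as it contracts to its pole. -/
theorem cap_acyclic {U : Submodule ℝ V} {N : V} (hN : ‖N‖ = 1) (hNU : N ∈ U) {ε : ℝ} (hε : 0 < ε) :
    ∃ δ > 0, ∀ (R : Type) [CommRing R] (c : Ch R V), c ∈ cl R (near (cap U N) δ) → bd c = 0 →
      ∃ e ∈ cl R (near (cap U N) ε), c = bd e := by
  have hNN : inner ℝ N N = (1 : ℝ) := by rw [real_inner_self_eq_norm_sq, hN]; norm_num
  have hne : ∀ s ∈ Set.Icc (0 : ℝ) 1, ∀ x ∈ cap U N, (1 - s) • x + s • N ≠ 0 := by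
    rintro s ⟨hs0, hs1⟩ x ⟨⟨hxU, hx⟩, hxN⟩ h0
    have h1 : (1 - s) • x = -(s • N) := eq_neg_of_add_eq_zero_left h0
    have h2 : 1 - s = s := by
      have := congrArg norm h1
      rw [norm_neg, norm_smul, norm_smul, hx, hN, Real.norm_of_nonneg (by linarith),
        Real.norm_of_nonneg hs0] at this
      linarith
    have h3 := congrArg (fun v => inner ℝ N v) h0
    simp only [inner_add_right, inner_smul_right, hNN, inner_zero_right] at h3
    nlinarith
  obtain ⟨δ, hδ, h⟩ := homotopy (A := cap U N) (B := cap U N)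
    (H := fun s x => radial ((1 - s) • x + s • N)) (by
      rintro s ⟨hs0, hs1⟩ x hx
      have hy := hne s ⟨hs0, hs1⟩ x hx
      obtain ⟨⟨hxU, hx1⟩, hxN⟩ := hx
      refine ⟨⟨U.smul_mem _ (U.add_mem (U.smul_mem _ hxU) (U.smul_mem _ hNU)), norm_radial hy⟩, ?_⟩
      set y := (1 - s) • x + s • N with hydef
      have hpos : 0 < ‖y‖ := norm_pos_iff.2 hy
      rw [radial, inner_smul_right]
      have h1 : inner ℝ N y = (1 - s) * inner ℝ N x + s := by
        rw [hydef, inner_add_right, inner_smul_right, inner_smul_right, hNN]; ring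
      have h2 : 1 - 2 * s ≤ ‖y‖ := by
        have e : (1 - s) • x = y - s • N := by rw [hydef]; abel
        have := norm_sub_le y (s • N)
        rw [← e, norm_smul, norm_smul, hx1, hN, Real.norm_of_nonneg (by linarith),
          Real.norm_of_nonneg hs0] at this
        linarith
      have h3 : -(1 / 2) * ‖y‖ ≤ inner ℝ N y := by
        rw [h1]; nlinarith
      calc (-(1 / 2) : ℝ) = ‖y‖⁻¹ * (-(1 / 2) * ‖y‖) := by field_simp
        _ ≤ ‖y‖⁻¹ * inner ℝ N y := by gcongr)
    (radial_uniform (isCompact_cap U N) (F := fun q => (1 - q.1) • q.2 + q.1 • N)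
      (by fun_prop) hne) hε
  refine ⟨δ, hδ, fun R _ c hc hbd => ?_⟩
  obtain ⟨h1, h2⟩ := h R c hc
  obtain ⟨e, he, h3⟩ := h2 hbd
  -- The end of the homotopy is the constant map to `N`, over which one takes a cone.
  have hN' : N ∈ cap U N := ⟨⟨hNU, hN⟩, by rw [hNN]; norm_num⟩
  have h4 : mp (fun x => radial ((1 - (0 : ℝ)) • x + (0 : ℝ) • N)) c = c := by
    refine mp_eq_self (fun x hx => ?_) hc
    simpa using radial_of_norm hx.1.1.2
  have h5 : (fun x : V => radial ((1 - (1 : ℝ)) • x + (1 : ℝ) • N)) = fun _ => N := by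
    funext x
    simpa using radial_of_norm hN
  rw [h4, h5] at h3
  have h6 : mp (fun _ => N) c ∈ cl R (fun x y : V => x = N ∧ y = N) :=
    mp_mem_cl (r := near (cap U N) δ) (fun _ _ _ => ⟨rfl, rfl⟩) hc
  refine ⟨cone N (mp (fun _ => N) c) - e, Submodule.sub_mem _ (cone_mem_cl ?_ ?_ ?_ h6) he, ?_⟩
  · exact ⟨hN', hN', by simpa⟩
  · rintro x ⟨rfl, -⟩
    exact ⟨⟨hN', hN', by simpa⟩, ⟨hN', hN', by simpa⟩⟩
  · rintro x y ⟨rfl, rfl⟩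
    exact ⟨hN', hN', by simpa⟩
  · rw [map_sub, bd_cone, bd_mp, hbd, map_zero, map_zero, sub_zero, ← h3]
    abel

/-- The intersection of two opposite caps retracts to the equator. -/
theorem equator_retract {U U₀ : Submodule ℝ V} {N : V} (hN : ‖N‖ = 1) (hNU : N ∈ U)
    (hproj : ∀ x ∈ U, x - (inner ℝ N x : ℝ) • N ∈ U₀) {ε : ℝ} (hε : 0 < ε) :
    ∃ δ > 0, ∀ (R : Type) [CommRing R] (c : Ch R V),
      c ∈ cl R (near (cap U N ∩ cap U (-N)) δ) → bd c = 0 →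
      ∃ w ∈ cl R (near (sph U₀) ε), bd w = 0 ∧ ∃ e ∈ cl R (near (cap U N ∩ cap U (-N)) ε),
        c = w + bd e := by
  have hNN : inner ℝ N N = (1 : ℝ) := by rw [real_inner_self_eq_norm_sq, hN]; norm_num
  set H : ℝ → V → V := fun s x => radial (x - (s * inner ℝ N x) • N) with hH
  have habs : ∀ x ∈ cap U N ∩ cap U (-N), |(inner ℝ N x : ℝ)| ≤ 1 / 2 := by
    rintro x ⟨⟨_, h1⟩, ⟨_, h2⟩⟩
    rw [inner_neg_left] at h2
    exact abs_le.2 ⟨h1, by linarith⟩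
  have hge : ∀ s ∈ Set.Icc (0 : ℝ) 1, ∀ x ∈ cap U N ∩ cap U (-N),
      1 - s * |(inner ℝ N x : ℝ)| ≤ ‖x - (s * inner ℝ N x) • N‖ := by
    rintro s ⟨hs0, hs1⟩ x hx
    have := norm_sub_norm_le x ((s * inner ℝ N x) • N)
    rwa [norm_smul, hN, hx.1.1.2, norm_mul, Real.norm_of_nonneg hs0, Real.norm_eq_abs,
      mul_one] at this
  have hne : ∀ s ∈ Set.Icc (0 : ℝ) 1, ∀ x ∈ cap U N ∩ cap U (-N),
      x - (s * inner ℝ N x) • N ≠ 0 := by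
    intro s hs x hx
    have h1 := hge s hs x hx
    have h2 := habs x hx
    have : 0 < ‖x - (s * inner ℝ N x) • N‖ := by
      have := hs.1; have := hs.2
      nlinarith [abs_nonneg (inner ℝ N x : ℝ)]
    exact norm_pos_iff.1 this
  have hcomp : IsCompact (cap U N ∩ cap U (-N)) :=
    (isCompact_cap U N).inter_right (isCompact_cap U (-N)).isClosed
  obtain ⟨δ, hδ, h⟩ := homotopy (A := cap U N ∩ cap U (-N)) (B := cap U N ∩ cap U (-N))
    (H := H) (by
      rintro s hs x hx
      have hy := hne s hs x hx
      have h1 := hge s hs x hx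
      have h2 := habs x hx
      have hyU : H s x ∈ sph U :=
        ⟨U.smul_mem _ (U.sub_mem hx.1.1.1 (U.smul_mem _ hNU)), norm_radial hy⟩
      set y := x - (s * inner ℝ N x) • N with hydef
      have hpos : 0 < ‖y‖ := norm_pos_iff.2 hy
      have h3 : (inner ℝ N y : ℝ) = (1 - s) * inner ℝ N x := by
        rw [hydef, inner_sub_right, inner_smul_right, hNN]; ring
      have h4 : |(inner ℝ N (H s x) : ℝ)| ≤ 1 / 2 := by
        have e : (inner ℝ N (H s x) : ℝ) = ‖y‖⁻¹ * inner ℝ N y := by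
          simp only [hH, ← hydef, radial, inner_smul_right]
        rw [e, abs_mul, abs_of_pos (inv_pos.2 hpos), inv_mul_le_iff₀ hpos, h3, abs_mul,
          abs_of_nonneg (by linarith [hs.2])]
        have := hs.1; have := hs.2
        nlinarith [abs_nonneg (inner ℝ N x : ℝ)]
      rw [abs_le] at h4
      exact ⟨⟨hyU, h4.1⟩, ⟨hyU, by rw [inner_neg_left]; linarith⟩⟩)
    (radial_uniform hcomp (F := fun q => q.2 - (q.1 * inner ℝ N q.2) • N) (by fun_prop) hne) hε
  refine ⟨δ, hδ, fun R _ c hc hbd => ?_⟩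
  obtain ⟨h1, h2⟩ := h R c hc
  obtain ⟨e, he, h3⟩ := h2 hbd
  have h4 : mp (H 0) c = c := by
    refine mp_eq_self (fun x hx => ?_) hc
    simpa [hH] using radial_of_norm hx.1.1.1.2
  refine ⟨mp (H 1) c, ?_, by rw [bd_mp, hbd, map_zero], -e, Submodule.neg_mem _ he, ?_⟩
  · -- The vertices of `mp (H 1) c` lie on the equator, and its simplices are small.
    have h5 : mp (H 1) c ∈ cl R (fun x y : V => x ∈ sph U₀ ∧ y ∈ sph U₀) := by
      refine mp_mem_cl (r := near (cap U N ∩ cap U (-N)) δ) ?_ hc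
      have : ∀ x ∈ cap U N ∩ cap U (-N), H 1 x ∈ sph U₀ := fun x hx =>
        ⟨U₀.smul_mem _ (by simpa using hproj x hx.1.1.1), norm_radial (hne 1 (by simp) x hx)⟩
      exact fun x y hxy => ⟨this x hxy.1, this y hxy.2.1⟩
    intro l hl x hx y hy
    exact ⟨(h5 hl x hx y hy).1, (h5 hl x hx y hy).2, (h1 hl x hx y hy).2.2⟩
  · rw [map_neg, ← h3, h4]
    abel

theorem cl_inf {R : Type} [CommRing R] {W : Type} {r s t : W → W → Prop}
    (h : ∀ x y, r x y → s x y → t x y) {c : Ch R W} (hr : c ∈ cl R r) (hs : c ∈ cl R s) :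
    c ∈ cl R t :=
  fun _ hl x hx y hy => h x y (hr hl x hx y hy) (hs hl x hx y hy)

/-- The inductive step in the computation of the homology of spheres: the Mayer-Vietoris argument
for the cover of the sphere by two opposite caps. -/
theorem isSpherical_step {U U₀ : Submodule ℝ V} {N : V} (hN : ‖N‖ = 1) (hNU : N ∈ U)
    (hU₀ : U₀ ≤ U) (hproj : ∀ x ∈ U, x - (inner ℝ N x : ℝ) • N ∈ U₀)
    (hperp : ∀ x ∈ U₀, inner ℝ N x = (0 : ℝ)) {k : ℕ} (ih : IsSpherical (near (sph U₀)) k) :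
    IsSpherical (near (sph U)) (k + 1) := by
  intro ε hε
  have hN' : ‖-N‖ = 1 := by rwa [norm_neg]
  have hNU' : -N ∈ U := U.neg_mem hNU
  obtain ⟨α₁, hα₁, hA₁⟩ := cap_acyclic hN hNU hε
  obtain ⟨β₁, hβ₁, hB₁⟩ := cap_acyclic hN' hNU' hε
  obtain ⟨η, hη, hηα, hηβ, hηε⟩ : ∃ η > 0, η ≤ α₁ ∧ η ≤ β₁ ∧ η ≤ ε :=
    ⟨min α₁ (min β₁ ε), by positivity, by simp, by simp, by simp⟩
  obtain ⟨α₂, hα₂, hA₂⟩ := cap_acyclic hN hNU hη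
  obtain ⟨β₂, hβ₂, hB₂⟩ := cap_acyclic hN' hNU' hη
  obtain ⟨ζ, hζ, hζα, hζβ, hζη⟩ : ∃ ζ > 0, ζ ≤ α₂ ∧ ζ ≤ β₂ ∧ ζ ≤ η :=
    ⟨min α₂ (min β₂ η), by positivity, by simp, by simp, by simp⟩
  obtain ⟨θ, hθ, z, hz, hzk, hbz, hsph⟩ := ih ζ hζ
  obtain ⟨δ, hδ, hret⟩ := equator_retract (U₀ := U₀) hN hNU hproj (lt_min hζ hθ)
  have hsubA : sph U₀ ⊆ cap U N := fun x hx =>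
    ⟨⟨hU₀ hx.1, hx.2⟩, by rw [hperp x hx.1]; norm_num⟩
  have hsubB : sph U₀ ⊆ cap U (-N) := fun x hx =>
    ⟨⟨hU₀ hx.1, hx.2⟩, by rw [inner_neg_left, hperp x hx.1]; norm_num⟩
  have hcapA : cap U N ⊆ sph U := fun x hx => hx.1
  have hcapB : cap U (-N) ⊆ sph U := fun x hx => hx.1
  -- The cycle `z` of the equator is filled in each of the caps.
  have hfill : ∀ (A : Set V), (∃ e ∈ cl ℤ (near A η), z = bd e) →
      ∃ e ∈ cl ℤ (near A η), e ∈ hom ℤ V (k + 1) ∧ bd e = z := by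
    rintro A ⟨e, he, rfl⟩
    exact ⟨pr (k + 1) e, pr_mem_cl _ he, pr_mem_hom _ _, by rw [bd_pr, pr_of_mem hzk]⟩
  obtain ⟨a₀, ha₀, ha₀k, hba₀⟩ := hfill _ (hA₂ ℤ z (cl_near_mono hsubA hζα hz) hbz)
  obtain ⟨b₀, hb₀, hb₀k, hbb₀⟩ := hfill _ (hB₂ ℤ z (cl_near_mono hsubB hζβ hz) hbz)
  refine ⟨min δ (min η 1), by positivity, a₀ - b₀,
    Submodule.sub_mem _ (cl_near_mono hcapA hηε ha₀) (cl_near_mono hcapB hηε hb₀),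
    Submodule.sub_mem _ ha₀k hb₀k, by rw [map_sub, hba₀, hbb₀, sub_self], ?_⟩
  intro R _ c hc hbc
  set ρ := min δ (min η 1) with hρ
  -- A simplex of diameter less than one lies in one of the two caps.
  have hsplit : c ∈ cl R (near (cap U N) ρ) ⊔ cl R (near (cap U (-N)) ρ) := by
    rw [cl, cl, ← supported_union]
    refine supported_mono ?_ hc
    intro l hl
    by_cases hl' : ∀ x ∈ l, x ∈ cap U N
    · exact Or.inl fun x hx y hy => ⟨hl' x hx, hl' y hy, (hl x hx y hy).2.2⟩
    · push Not at hl'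
      obtain ⟨x₀, hx₀, hx₀'⟩ := hl'
      have hx₁ : (inner ℝ N x₀ : ℝ) < -(1 / 2) := by
        by_contra hcon
        exact hx₀' ⟨(hl x₀ hx₀ x₀ hx₀).1, not_lt.1 hcon⟩
      have : ∀ x ∈ l, x ∈ cap U (-N) := by
        intro x hx
        refine ⟨(hl x hx x hx).1, ?_⟩
        have h1 : dist x x₀ < 1 := (hl x hx x₀ hx₀).2.2.trans_le (by simp [hρ])
        have h2 : (inner ℝ N (x - x₀) : ℝ) ≤ ‖N‖ * ‖x - x₀‖ := real_inner_le_norm _ _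
        rw [hN, one_mul, ← dist_eq_norm, inner_sub_right] at h2
        rw [inner_neg_left]
        linarith
      exact Or.inr fun x hx y hy => ⟨this x hx, this y hy, (hl x hx y hy).2.2⟩
  obtain ⟨a, ha, b, hb, rfl⟩ := Submodule.mem_sup.1 hsplit
  have hbab : bd b = -bd a := by
    rw [map_add] at hbc
    exact eq_neg_of_add_eq_zero_right hbc
  have hba : bd a ∈ cl R (near (cap U N ∩ cap U (-N)) δ) := by
    refine cl_inf (r := near (cap U N) ρ) (s := near (cap U (-N)) ρ) ?_ (bd_mem_cl ha) ?_
    · intro x y h1 h2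
      exact ⟨⟨h1.1, h2.1⟩, ⟨h1.2.1, h2.2.1⟩, h1.2.2.trans_le (by simp [hρ])⟩
    · rw [← neg_neg (bd a), ← hbab]
      exact Submodule.neg_mem _ (bd_mem_cl hb)
  obtain ⟨w, hw, hbw, e₁, he₁, h₁⟩ := hret R (bd a) hba (bd_bd a)
  obtain ⟨t, e₂, he₂, h₂⟩ := hsph R w (cl_near_mono subset_rfl (min_le_right _ _) hw) hbw
  have hcf : ∀ {A : Set V} {q : ℝ} {x : Ch ℤ V}, x ∈ cl ℤ (near A q) →
      cf (Int.castRingHom R) x ∈ cl R (near A q) := fun h => cf_mem_supported _ h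
  have hρη : ρ ≤ η := by simp [hρ]
  have hζη' : min ζ θ ≤ η := (min_le_left _ _).trans hζη
  obtain ⟨f, hf, h₃⟩ := hA₁ R (a - e₁ - e₂ - t • cf (Int.castRingHom R) a₀) (by
    refine cl_near_mono subset_rfl hηα (Submodule.sub_mem _ (Submodule.sub_mem _
      (Submodule.sub_mem _ (cl_near_mono subset_rfl hρη ha) ?_) ?_)
      (Submodule.smul_mem _ _ (hcf ha₀)))
    · exact cl_near_mono Set.inter_subset_left hζη' he₁
    · exact cl_near_mono hsubA hζη he₂) (by
    simp only [map_sub, map_smul, ← cf_bd, hba₀, h₁, h₂]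
    abel)
  obtain ⟨g, hg, h₄⟩ := hB₁ R (b + e₁ + e₂ + t • cf (Int.castRingHom R) b₀) (by
    refine cl_near_mono subset_rfl hηβ (Submodule.add_mem _ (Submodule.add_mem _
      (Submodule.add_mem _ (cl_near_mono subset_rfl hρη hb) ?_) ?_)
      (Submodule.smul_mem _ _ (hcf hb₀)))
    · exact cl_near_mono Set.inter_subset_right hζη' he₁
    · exact cl_near_mono hsubB hζη he₂) (by
    simp only [map_add, map_smul, ← cf_bd, hbb₀, hbab, h₁, h₂]
    abel)
  refine ⟨t, f + g, Submodule.add_mem _ (cl_near_mono hcapA le_rfl hf)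
    (cl_near_mono hcapB le_rfl hg), ?_⟩
  rw [map_add, ← h₃, ← h₄, map_sub, smul_sub]
  abel

end Sphere

/-- The unit sphere of Euclidean space has at most the homology of a sphere. The induction starts
with the empty sphere of a zero space, whose only simplex is the empty one. -/
theorem isSpherical_sphere (m : ℕ) :
    IsSpherical (near (sph (⊤ : Submodule ℝ (EuclideanSpace ℝ (Fin m))))) m := by
  let U : ℕ → Submodule ℝ (EuclideanSpace ℝ (Fin m)) := fun k =>
    { carrier := {x | ∀ i : Fin m, k ≤ i → x i = 0}
      add_mem' := fun {x y} hx hy i hi => by simp [hx i hi, hy i hi]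
      zero_mem' := fun i _ => by simp
      smul_mem' := fun a x hx i hi => by simp [hx i hi] }
  have hU : ∀ k x, x ∈ U k ↔ ∀ i : Fin m, k ≤ i → x i = 0 := fun k x => Iff.rfl
  have main : ∀ k ≤ m, IsSpherical (near (sph (U k))) k := by
    intro k
    induction k with
    | zero =>
      intro _ ε hε
      refine ⟨ε, hε, single [] 1, single_mem_cl _ (by simp), single_mem_supported _ _ (by simp),
        by simp [bdL], ?_⟩
      intro R _ c hc _
      refine ⟨c [], 0, zero_mem _, ?_⟩
      rw [map_zero, add_zero, cf_single, map_one, smul_single, smul_eq_mul, mul_one]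
      ext l
      cases l with
      | nil => simp
      | cons x l =>
        rw [single_apply, if_neg (by simp)]
        by_contra hne
        have h := (hc (Finsupp.mem_support_iff.2 hne) x (by simp) x (by simp)).1
        have h0 : x = 0 := by
          ext i
          exact (hU 0 x).1 h.1 i (by simp)
        have := h.2
        simp [h0] at this
    | succ k ih =>
      intro hk
      have hN : ∀ x : EuclideanSpace ℝ (Fin m),
          inner ℝ (EuclideanSpace.single (⟨k, hk⟩ : Fin m) (1 : ℝ)) x = x ⟨k, hk⟩ := by
        intro x
        simp [EuclideanSpace.inner_single_left]
      refine isSpherical_step (U₀ := U k) (N := EuclideanSpace.single (⟨k, hk⟩ : Fin m) (1 : ℝ))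
        (by simp) ?_ ?_ ?_ ?_ (ih (by omega))
      · rw [hU]
        intro i hi
        have : i ≠ ⟨k, hk⟩ := by rintro rfl; simp at hi
        simp [this]
      · intro x hx
        rw [hU] at hx ⊢
        exact fun i hi => hx i (by omega)
      · intro x hx
        rw [hU] at hx ⊢
        intro i hi
        rw [hN]
        by_cases h : i = ⟨k, hk⟩
        · subst h; simp
        · have : k + 1 ≤ i := by
            rcases Nat.lt_or_ge k i with h' | h'
            · exact h'
            · exact absurd (Fin.ext (le_antisymm h' hi)) h
          simp [h, hx i this]
      · intro x hx
        rw [hN]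
        exact (hU k x).1 hx _ le_rfl
  have hm := main m le_rfl
  have : U m = ⊤ := by
    rw [eq_top_iff]
    intro x _
    rw [hU]
    intro i hi
    exact absurd i.2 (by omega)
  rwa [this] at hm

/-- A retract, up to a change of scales, of a space with this property has the property too. -/
theorem IsSpherical.transfer {V W : Type} {r : ℝ → V → V → Prop} {s : ℝ → W → W → Prop} {k : ℕ}
    (hr : IsSpherical r k) (i : W → V) (q : V → W) (hqi : ∀ w, q (i w) = w)
    (h₁ : ∀ ε > 0, ∃ ε' > 0, ∀ x y, r ε' x y → s ε (q x) (q y))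
    (h₂ : ∀ δ > 0, ∃ δ' > 0, ∀ x y, s δ' x y → r δ (i x) (i y)) : IsSpherical s k := by
  intro ε hε
  obtain ⟨ε', hε', h₁⟩ := h₁ ε hε
  obtain ⟨δ, hδ, z, hz, hzk, hbz, H⟩ := hr ε' hε'
  obtain ⟨δ', hδ', h₂⟩ := h₂ δ hδ
  refine ⟨δ', hδ', mp q z, mp_mem_cl h₁ hz, mp_mem_hom q hzk, by rw [bd_mp, hbz, map_zero], ?_⟩
  intro R _ c hc hbc
  obtain ⟨a, e, he, h⟩ := H R (mp i c) (mp_mem_cl h₂ hc) (by rw [bd_mp, hbc, map_zero])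
  refine ⟨a, mp q e, mp_mem_cl h₁ he, ?_⟩
  have hid : mp q (mp i c) = c := by
    have : mp q ∘ₗ mp i = (LinearMap.id : Ch R W →ₗ[R] Ch R W) := by
      apply ext_single
      intro l
      simp [Function.comp_def, hqi]
    exact LinearMap.congr_fun this c
  rw [← hid, h, map_add, map_smul, bd_mp, cf_mp]

/-! ### The nilpotent operator of a shifted subgroup -/

section Operator

variable {R : Type} [CommRing R] {Ω ι : Type} [Fintype ι]

/-- For maps `f i` and scalars `α i`, the operator `∑ i, α i (f i - 1)` on the free module. If the
`f i` are the actions of generators of an elementary abelian `p`-group and `R` has characteristic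
`p`, then `1 + shift f α` generates what is called a cyclic shifted subgroup. -/
noncomputable def shift (f : ι → Ω → Ω) (α : ι → R) : Module.End R (Ω →₀ R) :=
  ∑ i, α i • (lmapDomain R R (f i) - 1)

theorem shift_single (f : ι → Ω → Ω) (α : ι → R) (l : Ω) :
    shift f α (single l 1) = ∑ i, α i • (single (f i l) 1 - single l 1) := by
  simp [shift, LinearMap.sum_apply]

theorem sum_pow_prime {A : Type} [Ring A] {p : ℕ} (hp : p.Prime) (h0 : (p : A) = 0)
    (f : ι → A) (hf : ∀ i j, Commute (f i) (f j)) : (∑ i, f i) ^ p = ∑ i, f i ^ p := by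
  classical
  have : ∀ s : Finset ι, (∑ i ∈ s, f i) ^ p = ∑ i ∈ s, f i ^ p := by
    intro s
    induction s using Finset.induction_on with
    | empty => simp [hp.ne_zero]
    | insert a s ha ih =>
      rw [Finset.sum_insert ha, Finset.sum_insert ha, ← ih,
        (Commute.sum_right _ _ _ fun i _ => hf a i).add_pow_prime_eq hp, h0]
      simp
  exact this _

theorem end_natCast {M : Type} [AddCommGroup M] [Module R M] {p : ℕ} (h : (p : R) = 0) :
    (p : Module.End R M) = 0 := by
  ext m
  rw [Module.End.natCast_apply, ← Nat.cast_smul_eq_nsmul R, h]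
  simp

theorem lmapDomain_mul (f g : Ω → Ω) :
    (lmapDomain R R f * lmapDomain R R g : Module.End R (Ω →₀ R)) = lmapDomain R R (f ∘ g) :=
  (lmapDomain_comp R R g f).symm

theorem lmapDomain_pow (f : Ω → Ω) (k : ℕ) :
    (lmapDomain R R f ^ k : Module.End R (Ω →₀ R)) = lmapDomain R R (f^[k]) := by
  induction k with
  | zero => simp [Module.End.one_eq_id]
  | succ k ih => rw [pow_succ, ih, lmapDomain_mul, Function.iterate_succ]

theorem commute_lmapDomain {f g : Ω → Ω} (h : ∀ x, f (g x) = g (f x)) :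
    Commute (lmapDomain R R f : Module.End R (Ω →₀ R)) (lmapDomain R R g) := by
  rw [Commute, SemiconjBy, lmapDomain_mul, lmapDomain_mul]
  congr 1
  funext x
  exact h x

theorem sub_one_pow_prime {A : Type} [Ring A] {p : ℕ} (hp : p.Prime) (h0 : (p : A) = 0) {a : A}
    (ha : a ^ p = 1) : (a - 1) ^ p = 0 := by
  have h2 := (Commute.one_right (a - 1)).add_pow_prime_eq hp
  rw [sub_add_cancel, ha, one_pow, h0, zero_mul, zero_mul, zero_mul, add_zero] at h2
  simpa using h2

theorem commute_sub_one {A : Type} [Ring A] {a b : A} (h : Commute a b) :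
    Commute (a - 1) (b - 1) :=
  (h.sub_left (Commute.one_left _)).sub_right (Commute.one_right _)

/-- In characteristic `p`, the operator of commuting permutations of order `p` is nilpotent. -/
theorem shift_pow_prime {p : ℕ} (hp : p.Prime) (h0 : (p : R) = 0) {f : ι → Ω → Ω} (α : ι → R)
    (hc : ∀ i j x, f i (f j x) = f j (f i x)) (hfp : ∀ i x, (f i)^[p] x = x) :
    shift f α ^ p = 0 := by
  rw [shift, sum_pow_prime hp (end_natCast h0)]
  · refine Finset.sum_eq_zero fun i _ => ?_
    rw [smul_pow, sub_one_pow_prime hp (end_natCast h0), smul_zero]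
    rw [lmapDomain_pow, show (f i)^[p] = id from funext (hfp i)]
    simp [Module.End.one_eq_id]
  · intro i j
    exact Commute.smul_left (Commute.smul_right
      (commute_sub_one (A := Module.End R (Ω →₀ R)) (commute_lmapDomain (hc i j))) _) _

end Operator

/-! ### Towers of chains -/

/-- The exponents `1, p - 1, 1, p - 1, …`, starting at the index `1`. -/
def ex (p i : ℕ) : ℕ := if i % 2 = 1 then 1 else p - 1

theorem ex_add {p : ℕ} (hp : p.Prime) (i : ℕ) : ex p (i + 1) + ex p i = p := by
  have := hp.two_le
  unfold ex
  split_ifs <;> omega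

theorem ex_pos {p : ℕ} (hp : p.Prime) (i : ℕ) : 0 < ex p i := by
  have := hp.two_le
  unfold ex
  split_ifs <;> omega

/-- A tower of height `j` in `C`, for an operator `T` with `T ^ p = 0`, is the image in `C` of the
first `j` terms of the periodic free resolution of the trivial module over the ring `R[T]/T ^ p`:
chains `x 1, …, x j` such that the boundary of `x 1` is the empty simplex and the boundary of
`x (i + 1)` is alternately `T (x i)` and `T ^ (p - 1) (x i)`. -/
structure IsTower {R X : Type} [CommRing R] (p : ℕ) (T : Module.End R (Ch R X))
    (C : Submodule R (Ch R X)) (x : ℕ → Ch R X) (j : ℕ) : Prop where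
  mem : ∀ i ≤ j, x i ∈ C
  hom : ∀ i ≤ j, x i ∈ hom R X i
  bd_one : bd (x 1) = single [] 1
  bd_succ : ∀ i, 1 ≤ i → i < j → bd (x (i + 1)) = (T ^ ex p i) (x i)

section Tower

variable {Q : Type} [AddCommGroup Q] {X : Type} [PseudoMetricSpace X] [AddAction Q X]

/-- Points that stay at distance less than `ε` under the action of all group elements. -/
def sim (Q : Type) [AddCommGroup Q] {X : Type} [PseudoMetricSpace X] [AddAction Q X]
    (ε : ℝ) (x y : X) : Prop :=
  ∀ g : Q, dist (g +ᵥ x) (g +ᵥ y) < ε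

variable {R : Type} [CommRing R] {ι : Type} [Fintype ι]

/-- The operator `shift` on chains, for group elements `u i`. -/
noncomputable abbrev chShift (X : Type) [AddAction Q X] (u : ι → Q) (α : ι → R) :
    Module.End R (Ch R X) :=
  shift (fun i (l : List X) => l.map (u i +ᵥ ·)) α

section
variable {X : Type} [AddAction Q X]

theorem chShift_apply (u : ι → Q) (α : ι → R) (c : Ch R X) :
    chShift X u α c = ∑ i, α i • (mp (u i +ᵥ ·) c - c) := by
  simp [chShift, shift, LinearMap.sum_apply, mp]

theorem bd_chShift (u : ι → Q) (α : ι → R) (c : Ch R X) :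
    bd (chShift X u α c) = chShift X u α (bd c) := by
  simp only [chShift_apply, map_sum, map_smul, map_sub, bd_mp]

theorem pow_comm_of_comm {M N : Type} [AddCommGroup M] [AddCommGroup N] [Module R M] [Module R N]
    {F : M →ₗ[R] N} {T : Module.End R M} {T' : Module.End R N}
    (h : ∀ c, F (T c) = T' (F c)) (k : ℕ) (c : M) : F ((T ^ k) c) = (T' ^ k) (F c) := by
  induction k generalizing c with
  | zero => simp
  | succ k ih => rw [pow_succ, pow_succ, Module.End.mul_apply, Module.End.mul_apply, ih, h]

theorem pow_mem_of_mem {M : Type} [AddCommGroup M] [Module R M] {T : Module.End R M}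
    {N : Submodule R M} (h : ∀ c ∈ N, T c ∈ N) (k : ℕ) : ∀ c ∈ N, (T ^ k) c ∈ N := by
  induction k with
  | zero => simp
  | succ k ih =>
    intro c hc
    rw [pow_succ, Module.End.mul_apply]
    exact ih _ (h c hc)

theorem chShift_mem_hom (u : ι → Q) (α : ι → R) {k : ℕ} :
    ∀ c ∈ hom R X k, chShift X u α c ∈ hom R X k := by
  intro c hc
  rw [chShift_apply]
  exact Submodule.sum_mem _ fun i _ => Submodule.smul_mem _ _
    (Submodule.sub_mem _ (mp_mem_hom _ hc) hc)

theorem chShift_empty (u : ι → Q) (α : ι → R) (a : R) : chShift X u α (single [] a) = 0 := by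
  rw [chShift_apply]
  simp

theorem chShift_pow_prime {p : ℕ} (hp : p.Prime) (h0 : (p : R) = 0) {u : ι → Q}
    (hu : ∀ i, p • u i = 0) (α : ι → R) : chShift X u α ^ p = 0 := by
  refine shift_pow_prime hp h0 α ?_ ?_
  · intro i j l
    simp only [List.map_map]
    congr 1
    funext x
    simp only [Function.comp_apply, vadd_vadd, add_comm]
  · intro i l
    have : ∀ k : ℕ, (fun l : List X => l.map (u i +ᵥ ·))^[k] l = l.map ((k • u i) +ᵥ ·) := by
      intro k
      induction k with
      | zero => simp
      | succ k ih =>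
        rw [Function.iterate_succ_apply', ih, List.map_map]
        congr 1
        funext x
        simp only [Function.comp_apply, vadd_vadd, succ_nsmul']
    rw [this, hu]
    simp

theorem cf_chShift {R' : Type} [CommRing R'] (f : R →+* R') (u : ι → Q) (α : ι → R) (c : Ch R X) :
    cf f (chShift X u α c) = chShift X u (fun i => f (α i)) (cf f c) := by
  simp only [chShift_apply, map_sum, cf_smul, map_sub, cf_mp]

theorem cf_chShift_pow {R' : Type} [CommRing R'] (f : R →+* R') (u : ι → Q) (α : ι → R) (k : ℕ)
    (c : Ch R X) :
    cf f ((chShift X u α ^ k) c) = (chShift X u (fun i => f (α i)) ^ k) (cf f c) := by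
  induction k generalizing c with
  | zero => simp
  | succ k ih => rw [pow_succ, pow_succ, Module.End.mul_apply, Module.End.mul_apply, ih, cf_chShift]

/-- The prescribed boundary of the next term of a tower is a cycle, as `T ^ p = 0`, and as `T`
annihilates the empty simplex. -/
theorem IsTower.bd_eq_zero {p : ℕ} (hp : p.Prime) (h0 : (p : R) = 0) {u : ι → Q}
    (hu : ∀ i, p • u i = 0) {α : ι → R} {C : Submodule R (Ch R X)} {x : ℕ → Ch R X} {j : ℕ}
    (h : IsTower p (chShift X u α) C x j) (hj : 1 ≤ j) :
    bd ((chShift X u α ^ ex p j) (x j)) = 0 := by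
  rw [pow_comm_of_comm (bd_chShift u α)]
  obtain ⟨i, rfl⟩ := Nat.exists_eq_add_of_le' hj
  rcases Nat.eq_zero_or_pos i with rfl | hi
  · rw [zero_add, h.bd_one, ← Nat.succ_pred_eq_of_pos (ex_pos hp 1), pow_succ,
      Module.End.mul_apply, chShift_empty, map_zero]
  · rw [h.bd_succ i hi (by omega), ← Module.End.mul_apply, ← pow_add, ex_add hp,
      chShift_pow_prime hp h0 hu, LinearMap.zero_apply]

theorem IsTower.succ {p : ℕ} {T : Module.End R (Ch R X)}
    {C D : Submodule R (Ch R X)} (hCD : C ≤ D) {x : ℕ → Ch R X} {j : ℕ}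
    (h : IsTower p T C x j) (hj : 1 ≤ j) {e : Ch R X} (he : e ∈ D)
    (hej : e ∈ PeriodicIsotropy.hom R X (j + 1))
    (hbe : bd e = (T ^ ex p j) (x j)) : IsTower p T D (Function.update x (j + 1) e) (j + 1) := by
  refine ⟨fun i hi => ?_, fun i hi => ?_, ?_, fun i hi hij => ?_⟩
  · rcases Nat.lt_or_eq_of_le hi with hi | rfl
    · rw [Function.update_of_ne (by omega)]
      exact hCD (h.mem i (by omega))
    · rwa [Function.update_self]
  · rcases Nat.lt_or_eq_of_le hi with hi | rfl
    · rw [Function.update_of_ne (by omega)]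
      exact h.hom i (by omega)
    · rwa [Function.update_self]
  · rw [Function.update_of_ne (by omega)]
    exact h.bd_one
  · rw [Function.update_of_ne (a := i) (by omega)]
    rcases Nat.lt_or_eq_of_le (Nat.lt_succ_iff.1 hij) with hi' | rfl
    · rw [Function.update_of_ne (by omega)]
      exact h.bd_succ i hi hi'
    · rwa [Function.update_self]

end

theorem chShift_mem_cl (u : ι → Q) (α : ι → R) {ε : ℝ} :
    ∀ c ∈ cl R (sim Q (X := X) ε), chShift X u α c ∈ cl R (sim Q (X := X) ε) := by
  intro c hc
  rw [chShift_apply]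
  refine Submodule.sum_mem _ fun i _ => Submodule.smul_mem _ _ (Submodule.sub_mem _ ?_ hc)
  refine mp_mem_cl (r := sim Q ε) ?_ hc
  intro x y h g
  rw [vadd_vadd, vadd_vadd]
  exact h _

theorem cl_sim_mono {ε δ : ℝ} (h : ε ≤ δ) : cl R (sim Q (X := X) ε) ≤ cl R (sim Q δ) :=
  cl_mono fun _ _ hxy g => (hxy g).trans_le h

/-- The obstruction `a` to making a tower higher. -/
theorem tower_obstruction {k : ℕ} (hX : IsSpherical (sim Q (X := X)) k) {p : ℕ} (hp : p.Prime)
    {u : ι → Q} (hu : ∀ i, p • u i = 0) {ε : ℝ} (hε : 0 < ε) :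
    ∃ δ > 0, δ ≤ ε ∧ ∃ z : Ch ℤ X, z ∈ hom ℤ X k ∧ ∀ (R : Type) [CommRing R] (α : ι → R)
      (x : ℕ → Ch R X) (j : ℕ), (p : R) = 0 → 1 ≤ j →
      IsTower p (chShift X u α) (cl R (sim Q δ)) x j →
      ∃ a : R, ∃ e ∈ cl R (sim Q (X := X) ε),
        (chShift X u α ^ ex p j) (x j) = a • cf (Int.castRingHom R) z + bd e := by
  obtain ⟨δ, hδ, z, -, hzk, -, H⟩ := hX ε hε
  refine ⟨min δ ε, by positivity, min_le_right _ _, z, hzk, fun R _ α x j h0 hj hx => ?_⟩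
  have hmem := pow_mem_of_mem (chShift_mem_cl u α) (ex p j) _
    (cl_sim_mono (min_le_left _ _) (hx.mem j le_rfl))
  exact H R _ hmem (hx.bd_eq_zero hp h0 hu hj)

/-- Away from the critical degree a tower can be made higher, with a loss of scale. -/
theorem tower_extend {k : ℕ} (hX : IsSpherical (sim Q (X := X)) k) {p : ℕ} (hp : p.Prime)
    {u : ι → Q} (hu : ∀ i, p • u i = 0) {j : ℕ} (hj : 1 ≤ j) (hjk : j ≠ k) {ε : ℝ} (hε : 0 < ε) :
    ∃ δ > 0, ∀ (R : Type) [CommRing R] (α : ι → R) (x : ℕ → Ch R X), (p : R) = 0 →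
      IsTower p (chShift X u α) (cl R (sim Q δ)) x j →
      ∃ x', IsTower p (chShift X u α) (cl R (sim Q ε)) x' (j + 1) := by
  obtain ⟨δ, hδ, hδε, z, hzk, H⟩ := tower_obstruction hX hp hu hε
  refine ⟨δ, hδ, fun R _ α x h0 hx => ?_⟩
  obtain ⟨a, e, he, h⟩ := H R α x j h0 hj hx
  refine ⟨_, hx.succ (cl_sim_mono hδε) hj (pr_mem_cl (j + 1) he) (pr_mem_hom _ _) ?_⟩
  rw [bd_pr, ← pr_of_mem (pow_mem_of_mem (chShift_mem_hom u α) (ex p j) _ (hx.hom j le_rfl)), h,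
    map_add, map_smul, pr_of_mem_ne hjk (cf_mem_supported _ hzk), smul_zero, zero_add]

/-- Below the critical degree there are towers at all scales and over all rings. -/
theorem tower_low [Nonempty X] {k : ℕ} (hX : IsSpherical (sim Q (X := X)) k) {p : ℕ}
    (hp : p.Prime) {u : ι → Q} (hu : ∀ i, p • u i = 0) {R : Type} [CommRing R] (h0 : (p : R) = 0)
    (α : ι → R) {j : ℕ} (hj : 1 ≤ j) (hjk : j ≤ k) :
    ∀ ε > 0, ∃ x, IsTower p (chShift X u α) (cl R (sim Q (X := X) ε)) x j := by
  induction j, hj using Nat.le_induction with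
  | base =>
    intro ε hε
    obtain ⟨x₀⟩ := ‹Nonempty X›
    refine ⟨fun i => if i = 1 then single [x₀] 1 else if i = 0 then single [] 1 else 0,
      fun i hi => ?_, fun i hi => ?_, ?_, fun i h1 h2 => by omega⟩
    · interval_cases i
      · exact single_mem_cl _ (by simp)
      · exact single_mem_cl _ (by simpa [sim] using hε)
    · interval_cases i <;> exact single_mem_supported R _ (by simp)
    · simp [bdL]
  | succ j hj ih =>
    intro ε hε
    obtain ⟨δ, hδ, H⟩ := tower_extend hX hp hu hj (by omega) hε
    obtain ⟨x, hx⟩ := ih (by omega) δ hδ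
    exact H R α x h0 hx

open Polynomial Polynomial.Bivariate in
/-- A polynomial in two variables over an algebraically closed field takes the value it has at the
origin at some other point. -/
theorem exists_evalEval_eq {K : Type} [Field K] [IsAlgClosed K] (f : K[X][Y]) :
    ∃ b c : K, (b ≠ 0 ∨ c ≠ 0) ∧ evalEval b c f = evalEval 0 0 f := by
  by_contra! hcon
  set a := evalEval 0 0 f with ha
  -- On a line `c = const` other than the axis, `f - a` has no zero, so it is constant.
  have h1 : ∀ c : K, c ≠ 0 → ∀ b, evalEval b c f = evalEval 0 c f := by
    intro c hc b
    have hdeg : (eval (C c) f - C a).degree = 0 := by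
      by_contra hd
      obtain ⟨b, hb⟩ := IsAlgClosed.exists_root _ hd
      refine hcon b c (Or.inr hc) ?_
      simpa [evalEval, sub_eq_zero] using hb
    have h2 := eq_C_of_degree_eq_zero hdeg
    have h3 : eval (C c) f = C (coeff (eval (C c) f - C a) 0 + a) := by
      rw [map_add, ← h2]; ring
    simp only [evalEval]
    rw [h3]
    simp
  have h2 : f.map (evalRingHom 1) = f.map (evalRingHom 0) := by
    refine eq_of_infinite_eval_eq _ _ (Set.Infinite.mono (s := {0}ᶜ) ?_ ?_)
    · intro c hc
      have := h1 c hc 1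
      simpa [map_evalRingHom_eval] using this
    · exact (Set.finite_singleton 0).infinite_compl
  refine hcon 1 0 (Or.inl one_ne_zero) ?_
  rw [ha, ← map_evalRingHom_eval, ← map_evalRingHom_eval, h2]

open Polynomial Polynomial.Bivariate in
/-- The tower passes the critical degree for a suitable value of the parameters. The obstruction to
this is a polynomial in the parameters. -/
theorem tower_high {X : Type} [PseudoMetricSpace X] [AddAction Q X] [Nonempty X] {k : ℕ}
    (hk : 1 ≤ k) (hX : IsSpherical (sim Q (X := X)) k)
    {p : ℕ} (hp : p.Prime) {u : ι → Q} (hu : ∀ i, p • u i = 0) {K : Type} [Field K] [IsAlgClosed K]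
    (h0 : (p : K) = 0) (α : ι → K[X][Y]) (hα : ∀ i, evalEval 0 0 (α i) = 0) {j : ℕ}
    (hj : k + 1 ≤ j) :
    ∀ ε > 0, ∃ b c : K, (b ≠ 0 ∨ c ≠ 0) ∧ ∃ x,
      IsTower p (chShift X u fun i => evalEval b c (α i)) (cl K (sim Q (X := X) ε)) x j := by
  induction j, hj using Nat.le_induction with
  | base =>
    intro ε hε
    have h0' : (p : K[X][Y]) = 0 := by
      have := congrArg (fun a : K => C (C a)) h0
      simpa using this
    obtain ⟨δ, hδ, hδε, z, hzk, H⟩ := tower_obstruction hX hp hu hε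
    obtain ⟨x, hx⟩ := tower_low hX hp hu h0' α hk le_rfl δ hδ
    obtain ⟨a, e, he, h⟩ := H _ α x k h0' hk hx
    obtain ⟨b, c, hbc, hval⟩ := exists_evalEval_eq a
    -- The obstruction at `(b, c)` is the same as at the origin, where the operator vanishes.
    have hspec : ∀ b c : K, ((chShift X u fun i => evalEval b c (α i)) ^ ex p k)
        (cf (evalEvalRingHom b c) (x k)) = evalEval b c a • cf (Int.castRingHom K) z +
          bd (cf (evalEvalRingHom b c) e) := by
      intro b c
      have := congrArg (cf (evalEvalRingHom b c)) h
      rw [cf_chShift_pow, map_add, cf_smul, cf_cf, cf_bd, RingHom.eq_intCast'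
        ((evalEvalRingHom b c).comp (Int.castRingHom K[X][Y]))] at this
      exact this
    have hzero := hspec 0 0
    have hT : (chShift X u fun i => evalEval 0 0 (α i)) = (0 : Module.End K (Ch K X)) := by
      simp [chShift, shift, hα]
    rw [hT, zero_pow (ex_pos hp k).ne', LinearMap.zero_apply] at hzero
    have hx' : IsTower p (chShift X u fun i => evalEval b c (α i)) (cl K (sim Q (X := X) ε))
        (fun i => cf (evalEvalRingHom b c) (x i)) k := by
      refine ⟨fun i hi => ?_, fun i hi => cf_mem_supported _ (hx.hom i hi), ?_, fun i h1 h2 => ?_⟩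
      · exact cl_sim_mono hδε (cf_mem_supported _ (hx.mem i hi))
      · rw [← cf_bd, hx.bd_one, cf_single, map_one]
      · rw [← cf_bd, hx.bd_succ i h1 h2, cf_chShift_pow]
        rfl
    have he' : ∀ b c : K, cf (evalEvalRingHom b c) e ∈ cl K (sim Q (X := X) ε) := fun b c =>
      cf_mem_supported _ he
    refine ⟨b, c, hbc, _, hx'.succ le_rfl hk (e := pr (k + 1)
      (cf (evalEvalRingHom b c) e - cf (evalEvalRingHom 0 0) e)) (pr_mem_cl _ (Submodule.sub_mem _
      (he' _ _) (he' _ _))) (pr_mem_hom _ _) ?_⟩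
    have h1 := hspec b c
    rw [hval] at h1
    have h2 : ((chShift X u fun i => evalEval b c (α i)) ^ ex p k)
        (cf (evalEvalRingHom b c) (x k)) =
          bd (cf (evalEvalRingHom b c) e - cf (evalEvalRingHom 0 0) e) := by
      rw [map_sub, h1, eq_neg_of_add_eq_zero_right hzero.symm]
      abel
    rw [bd_pr, ← h2]
    exact pr_of_mem (pow_mem_of_mem (chShift_mem_hom u _) _ _ (hx'.hom k le_rfl))
  | succ j hj ih =>
    intro ε hε
    obtain ⟨δ, hδ, H⟩ := tower_extend hX hp hu (by omega : 1 ≤ j) (by omega) hε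
    obtain ⟨b, c, hbc, x, hx⟩ := ih δ hδ
    exact ⟨b, c, hbc, H K _ x h0 hx⟩

end Tower

/-! ### Freeness over a cyclic shifted subgroup -/

section Weyl

variable {K M : Type} [Field K] [AddCommGroup M] [Module K M] {t D : Module.End K M}

theorem weyl_pow (h : D * t - t * D = 1) (j : ℕ) :
    t * D ^ (j + 1) = D ^ (j + 1) * t - ((j + 1 : ℕ) : K) • D ^ j := by
  have h' : t * D = D * t - 1 := by rw [← h]; abel
  induction j with
  | zero => simp [h']
  | succ j ih =>
    rw [pow_succ D (j + 1), ← mul_assoc, ih, sub_mul, mul_assoc, h', smul_mul_assoc, ← pow_succ,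
      mul_sub, ← mul_assoc, mul_one, Nat.cast_succ (j + 1), add_smul, one_smul]
    abel

/-- In characteristic `p` the factor is invertible for `j < p`, so the kernel of `t` lies in the
image of `t ^ (p - 1)`. -/
theorem weyl_factorial (h : D * t - t * D = 1) {m : M} (hm : t m = 0) (j : ℕ) :
    (t ^ j * D ^ j) m = ((-1) ^ j * (j.factorial : K)) • m := by
  induction j with
  | zero => simp
  | succ j ih =>
    rw [pow_succ t, mul_assoc, weyl_pow h, mul_sub, mul_smul_comm, LinearMap.sub_apply,
      LinearMap.smul_apply, ih, Module.End.mul_apply, Module.End.mul_apply, hm, map_zero, map_zero,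
      zero_sub, smul_smul, ← neg_smul, Nat.factorial_succ]
    congr 1
    push_cast
    ring

/-- An operator `t` which satisfies the Weyl relation with another operator is exact in
characteristic `p`. If moreover `t ^ p = 0`, this means that `M` is free over the ring
`K[t] / t ^ p`. -/
theorem weyl_exact {p : ℕ} (hp : p.Prime) [CharP K p] (h : D * t - t * D = 1) {q : ℕ} (hq : q ≤ p)
    (m : M) (hm : (t ^ q) m = 0) : ∃ w, m = (t ^ (p - q)) w := by
  induction q generalizing m with
  | zero => exact ⟨0, by simpa using hm⟩
  | succ q ih =>
    have h0 : t ((t ^ q) m) = 0 := by rwa [← Module.End.mul_apply, ← pow_succ']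
    have hc : (-1) ^ (p - 1) * ((p - 1).factorial : K) ≠ 0 := by
      refine mul_ne_zero (pow_ne_zero _ (by simp)) ?_
      rw [Ne, CharP.cast_eq_zero_iff K p, hp.dvd_factorial]
      have := hp.pos
      omega
    have h1 := weyl_factorial h h0 (p - 1)
    set c := (-1) ^ (p - 1) * ((p - 1).factorial : K)
    set w := c⁻¹ • (D ^ (p - 1)) ((t ^ q) m) with hw
    have h2 : (t ^ q) m = (t ^ (p - 1)) w := by
      rw [hw, map_smul, ← Module.End.mul_apply, h1, smul_smul, inv_mul_cancel₀ hc, one_smul]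
    obtain ⟨w', hw'⟩ := ih (by omega) (m - (t ^ (p - (q + 1))) w) (by
      rw [map_sub, ← Module.End.mul_apply, ← pow_add, h2, show q + (p - (q + 1)) = p - 1 by omega,
        sub_self])
    refine ⟨w + t w', ?_⟩
    rw [map_add, ← Module.End.mul_apply, ← pow_succ, show p - (q + 1) + 1 = p - q by omega, ← hw']
    abel

end Weyl

section Diag

variable {K Ω ι : Type} [Field K] [Fintype ι]

/-- The diagonal operator with entries `f`. -/
noncomputable def diag (f : Ω → K) : Module.End K (Ω →₀ K) :=
  linearCombination K fun ω => single ω (f ω)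

theorem diag_single (f : Ω → K) (ω : Ω) (a : K) :
    diag f (single ω a) = single ω (a * f ω) := by
  simp [diag]

theorem diag_mul (f g : Ω → K) : diag f * diag g = diag fun ω => f ω * g ω := by
  apply ext_single
  intro ω
  simp [diag_single, Module.End.mul_apply, mul_comm]

theorem diag_pow (f : Ω → K) (k : ℕ) : diag f ^ k = diag fun ω => f ω ^ k := by
  induction k with
  | zero =>
    apply ext_single
    intro ω
    simp [diag_single]
  | succ k ih => rw [pow_succ, ih, diag_mul]; simp only [pow_succ]

theorem commute_diag_lmapDomain {f : Ω → K} {g : Ω → Ω} (h : ∀ ω, f (g ω) = f ω) :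
    Commute (diag f) (lmapDomain K K g : Module.End K (Ω →₀ K)) := by
  apply ext_single
  intro ω
  simp [diag_single, Module.End.mul_apply, h]

theorem weyl_of_commute {A : Type} [Ring A] {g d t τ : A} (hg : Commute g t) (h : d * t - t * d = τ)
    (hτ : g * τ = 1) : g * d * t - t * (g * d) = 1 := by
  rw [← mul_assoc t, ← hg.eq, mul_assoc, mul_assoc _ t, ← mul_sub, h, hτ]

/-- If the permutations `f i` of a basis translate a function `φ` by amounts `χ` that are constant
on orbits, and `∑ i, α i * χ ω i` does not vanish, then `shift f α` is part of a pair of operators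
that satisfy the Weyl relation. -/
theorem exists_weyl {p : ℕ} (hp : p.Prime) (h0 : (p : K) = 0) {f : ι → Ω → Ω} {α : ι → K}
    (hc : ∀ i j x, f i (f j x) = f j (f i x)) (hfp : ∀ i x, (f i)^[p] x = x)
    {φ : Ω → K} {χ : Ω → ι → K} (hφ : ∀ i ω, φ (f i ω) = φ ω + χ ω i)
    (hχ : ∀ i j ω, χ (f j ω) i = χ ω i) (hs : ∀ ω, ∑ i, α i * χ ω i ≠ 0) :
    ∃ D : Module.End K (Ω →₀ K), D * shift f α - shift f α * D = 1 := by
  let L : ι → Module.End K (Ω →₀ K) := fun i => lmapDomain K K (f i)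
  let t : Module.End K (Ω →₀ K) := shift f α
  let E : ι → Module.End K (Ω →₀ K) := fun i => diag fun ω => χ ω i
  have hEL : ∀ i j, Commute (E i) (L j) := fun i j => commute_diag_lmapDomain (hχ i j)
  have hLL : ∀ i j, Commute (L i) (L j) := fun i j => commute_lmapDomain (hc i j)
  have hEE : ∀ i j, Commute (E i) (E j) := fun i j => by
    rw [Commute, SemiconjBy, diag_mul, diag_mul]
    simp only [mul_comm]
  have ht : t = ∑ i, α i • (L i - 1) := rfl
  have hcomm : ∀ A : Module.End K (Ω →₀ K), (∀ j, Commute A (L j)) → Commute A t := by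
    intro A hA
    rw [ht]
    refine Commute.sum_right _ _ _ fun j _ => Commute.smul_right ?_ _
    exact Commute.sub_right (R := Module.End K (Ω →₀ K)) (hA j) (Commute.one_right A)
  let τ : Module.End K (Ω →₀ K) := ∑ i, α i • (L i * E i)
  have hτL : ∀ j, Commute τ (L j) := fun j =>
    Commute.sum_left _ _ _ fun i _ => Commute.smul_left ((hLL i j).mul_left (hEL i j)) _
  have hD : diag φ * t - t * diag φ = τ := by
    apply ext_single
    intro ω
    simp only [ht, τ, LinearMap.sub_apply, Module.End.mul_apply, LinearMap.sum_apply, map_sum,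
      LinearMap.smul_apply, map_smul, diag_single, L, E, Module.End.one_apply, map_sub,
      lmapDomain_apply, mapDomain_single, ← Finset.sum_sub_distrib, ← smul_sub, one_mul, hφ]
    refine Finset.sum_congr rfl fun i _ => ?_
    rw [single_add]
    congr 1
    abel
  have hτp : τ ^ p = diag fun ω => (∑ i, α i * χ ω i) ^ p := by
    rw [sum_pow_prime hp (end_natCast h0)]
    · have hL : ∀ i, L i ^ p = 1 := fun i => by
        simp only [L]
        rw [lmapDomain_pow, show (f i)^[p] = id from funext (hfp i)]
        simp [Module.End.one_eq_id]
      simp only [smul_pow, (hEL _ _).symm.mul_pow, hL, one_mul]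
      apply ext_single
      intro ω
      simp only [E, diag_pow, LinearMap.sum_apply, LinearMap.smul_apply, diag_single, one_mul,
        smul_single, smul_eq_mul]
      rw [sum_pow_prime hp h0 _ fun i j => Commute.all _ _, ← single_finsetSum]
      simp only [mul_pow]
    · intro i j
      refine Commute.smul_left (Commute.smul_right ?_ _) _
      exact ((hLL i j).mul_right (hEL j i).symm).mul_left ((hEL i j).mul_right (hEE i j))
  let F : Module.End K (Ω →₀ K) := diag fun ω => ((∑ i, α i * χ ω i) ^ p)⁻¹
  have hFL : ∀ j, Commute F (L j) := fun j => commute_diag_lmapDomain fun ω => by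
    simp only [hχ]
  have hFτ : F * τ ^ (p - 1) * τ = 1 := by
    rw [mul_assoc, ← pow_succ, Nat.sub_add_cancel hp.pos, hτp, diag_mul]
    apply ext_single
    intro ω
    simp [diag_single, inv_mul_cancel₀ (pow_ne_zero p (hs ω))]
  have hGt : Commute (F * τ ^ (p - 1)) t :=
    hcomm _ fun j => (hFL j).mul_left ((hτL j).pow_left _)
  refine ⟨F * τ ^ (p - 1) * diag φ, ?_⟩
  exact weyl_of_commute (A := Module.End K (Ω →₀ K)) hGt hD hFτ

end Diag

section Free

variable {Q : Type} [AddCommGroup Q] {X : Type} [AddAction Q X] {ι : Type} [Fintype ι]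
  {K : Type} [Field K]

/-- A choice of origins in the orbits turns characters that vanish on the stabilizers into a
function on the whole set. -/
theorem exists_potential {u : ι → Q} {α : ι → K}
    (hχ : ∀ x : X, ∃ χ : Q →+ K, (∀ g, g +ᵥ x = x → χ g = 0) ∧ ∑ i, α i * χ (u i) ≠ 0) :
    ∃ (φ : X → K) (χ : X → ι → K), (∀ i x, φ (u i +ᵥ x) = φ x + χ x i) ∧
      (∀ i j x, χ (u j +ᵥ x) i = χ x i) ∧ ∀ x, ∑ i, α i * χ x i ≠ 0 := by
  choose χ hχ0 hχs using hχ
  let o : X → X := fun x => Quotient.out (s := AddAction.orbitRel Q X) (Quotient.mk _ x)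
  have ho : ∀ x, ∃ g : Q, g +ᵥ o x = x := fun x => by
    have h : (AddAction.orbitRel Q X) (o x) x := Quotient.mk_out (s := AddAction.orbitRel Q X) x
    exact AddAction.orbitRel_apply.1 (Setoid.symm' _ h)
  have hinv : ∀ (g : Q) x, o (g +ᵥ x) = o x := fun g x => by
    refine congrArg (Quotient.out (s := AddAction.orbitRel Q X)) (Quotient.sound ?_)
    exact AddAction.orbitRel_apply.2 ⟨g, rfl⟩
  choose g hg using ho
  refine ⟨fun x => χ (o x) (g x), fun x i => χ (o x) (u i), fun i x => ?_, fun i j x => ?_,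
    fun x => hχs _⟩
  · simp only [hinv]
    have h1 : (g (u i +ᵥ x) - (u i + g x)) +ᵥ o x = o x := by
      have := hg (u i +ᵥ x)
      rw [hinv] at this
      rw [sub_eq_neg_add, ← vadd_vadd, this, neg_vadd_eq_iff, ← vadd_vadd, hg]
    have h2 := hχ0 _ _ h1
    rw [map_sub, map_add, sub_eq_zero] at h2
    rw [h2, add_comm]
  · simp only [hinv]

theorem pr_chShift (u : ι → Q) (α : ι → K) (k : ℕ) (c : Ch K X) :
    pr k (chShift X u α c) = chShift X u α (pr k c) := by
  have : ∀ g : X → X, ∀ c : Ch K X, pr k (mp g c) = mp g (pr k c) := by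
    intro g c
    have : pr k ∘ₗ mp g = mp (R := K) g ∘ₗ pr k := by
      apply ext_single
      intro l
      simp only [LinearMap.comp_apply, mp_single, pr_single, List.length_map]
      split_ifs <;> simp
    exact LinearMap.congr_fun this c
  simp only [chShift_apply, map_sum, map_smul, map_sub, this]

/-- The chains in each nonnegative degree are free over the algebra generated by `chShift`, if each
stabilizer is separated by a character from the direction `α` of the operator. The basis is given by
nonempty lists, and the stabilizer of the head contains the stabilizer of the list. -/
theorem chShift_exact {p : ℕ} (hp : p.Prime) [CharP K p] {u : ι → Q} (hu : ∀ i, p • u i = 0)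
    {α : ι → K}
    (hχ : ∀ x : X, ∃ χ : Q →+ K, (∀ g, g +ᵥ x = x → χ g = 0) ∧ ∑ i, α i * χ (u i) ≠ 0)
    {k q : ℕ} (hk : 1 ≤ k) (hq : q ≤ p) {d : Ch K X} (hd : d ∈ hom K X k)
    (hdq : (chShift X u α ^ q) d = 0) : ∃ w ∈ hom K X k, d = (chShift X u α ^ (p - q)) w := by
  have h0 : (p : K) = 0 := CharP.cast_eq_zero K p
  obtain ⟨φ, χ, h1, h2, h3⟩ := exists_potential hχ
  let f : ι → X × List X → X × List X := fun i y => (u i +ᵥ y.1, y.2.map (u i +ᵥ ·))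
  have hf : ∀ (i : ι) (n : ℕ) y, (f i)^[n] y = ((n • u i) +ᵥ y.1, y.2.map ((n • u i) +ᵥ ·)) := by
    intro i n y
    induction n with
    | zero => simp
    | succ n ih =>
      rw [Function.iterate_succ_apply', ih]
      simp only [f, List.map_map, vadd_vadd, succ_nsmul']
      congr 2
      funext x
      simp only [Function.comp_apply, vadd_vadd]
  obtain ⟨D, hD⟩ := exists_weyl (f := f) (α := α) hp h0 (φ := fun y => φ y.1)
    (χ := fun y => χ y.1)
    (by
      intro i j y
      simp only [f, List.map_map, vadd_vadd, add_comm (u i)]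
      congr 2
      funext x
      simp only [Function.comp_apply, vadd_vadd, add_comm (u i)])
    (fun i y => by rw [hf, hu]; simp) (fun i y => h1 i y.1) (fun i j y => h2 i j y.1)
    (fun y => h3 y.1)
  -- The nonempty lists are the pairs of a head and a tail.
  let J : (X × List X →₀ K) →ₗ[K] Ch K X := lmapDomain K K fun y => y.1 :: y.2
  have hJinj : Function.Injective J := mapDomain_injective fun y z h => by
    simpa [Prod.ext_iff] using h
  have hJt : ∀ c, J (shift f α c) = chShift X u α (J c) := by
    intro c
    have : J ∘ₗ shift f α = chShift X u α ∘ₗ J := by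
      apply ext_single
      intro y
      simp [shift_single, J, f, map_sum, map_sub]
    exact LinearMap.congr_fun this c
  have hJr : d ∈ LinearMap.range J := by
    refine map_mem_of_supported LinearMap.id ?_ hd
    intro l hl
    obtain ⟨x, l', rfl⟩ := List.exists_cons_of_length_pos (l := l)
      (by rw [show l.length = k from hl]; omega)
    exact ⟨single (x, l') 1, by simp [J]⟩
  obtain ⟨m, rfl⟩ := hJr
  obtain ⟨w, hw⟩ := weyl_exact hp hD hq m (hJinj (by
    rw [pow_comm_of_comm hJt, hdq, map_zero]))
  refine ⟨pr k (J w), pr_mem_hom _ _, ?_⟩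
  rw [← pow_comm_of_comm (T := chShift X u α) (F := pr k) (pr_chShift u α k) (p - q) (J w),
    ← pow_comm_of_comm hJt, ← hw, pr_of_mem hd]

end Free

/-! ### A chain map to a complex of bounded dimension -/

section Insert

variable {K : Type} [CommRing K] {X W : Type} (idx : W → ℕ)

/-- Insertion of a vertex into a simplex whose vertices are sorted by the label `idx`, with the sign
of the permutation that moves the vertex from the front to its place. The result is zero if the
label occurs already. -/
noncomputable def ins (w : W) : List W → Ch K W
  | [] => single [w] 1
  | a :: l => if idx w < idx a then single (w :: a :: l) 1
      else if idx w = idx a then 0 else -cone a (ins w l)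

/-- Linear extension of `ins`. -/
noncomputable def Ins (w : W) : Ch K W →ₗ[K] Ch K W := linearCombination K (ins idx w)

@[simp] theorem Ins_single (w : W) (l : List W) : Ins idx w (single l (1 : K)) = ins idx w l := by
  simp [Ins]

theorem ins_of_lt {w : W} {l : List W} (h : ∀ a ∈ l, idx w < idx a) :
    ins idx w l = single (w :: l) (1 : K) := by
  cases l with
  | nil => rfl
  | cons a l => simp [ins, h a (by simp)]

theorem Ins_of_lt {w : W} {c : Ch K W} (hc : c ∈ supported K K {l | ∀ a ∈ l, idx w < idx a}) :
    Ins idx w c = cone w c := by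
  refine eq_of_supported _ _ (fun l hl => ?_) hc
  rw [Ins_single, cone_single, ins_of_lt idx hl]

theorem Ins_cone_of_eq {w a : W} (h : idx w = idx a) (c : Ch K W) : Ins idx w (cone a c) = 0 := by
  have : Ins idx w ∘ₗ cone a = (0 : Ch K W →ₗ[K] Ch K W) := by
    apply ext_single
    intro l
    simp [ins, h]
  exact LinearMap.congr_fun this c

theorem Ins_cone_of_gt {w a : W} (h : idx a < idx w) (c : Ch K W) :
    Ins idx w (cone a c) = -cone a (Ins idx w c) := by
  have : Ins idx w ∘ₗ cone a = -(cone (R := K) a ∘ₗ Ins idx w) := by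
    apply ext_single
    intro l
    simp [ins, h.not_gt, h.ne']
  exact LinearMap.congr_fun this c

/-- On sorted simplices, insertion satisfies the same formula as the cone construction, if the label
of the new vertex is not taken by a different vertex. -/
theorem bd_ins {w : W} {l : List W} (hl : l.Pairwise fun a b => idx a < idx b)
    (hw : ∀ a ∈ l, idx a = idx w → a = w) :
    bd (ins idx w l) = (single l 1 - Ins idx w (bdL l) : Ch K W) := by
  induction l with
  | nil => simp [ins, bdL]
  | cons a l ih =>
    rw [List.pairwise_cons] at hl
    rcases lt_trichotomy (idx w) (idx a) with h | h | h
    · have h' : ∀ b ∈ a :: l, idx w < idx b := by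
        intro b hb
        rcases List.mem_cons.1 hb with rfl | hb
        · exact h
        · exact h.trans (hl.1 b hb)
      rw [ins_of_lt idx h', bd_single, Ins_of_lt]
      · rw [bdL]
      · refine supported_mono ?_ (bdL_mem (a :: l))
        exact fun l' hl' b hb => h' b (hl' b hb)
    · obtain rfl := hw a (by simp) h.symm
      rw [bdL, map_sub, Ins_cone_of_eq idx rfl, Ins_single, ins_of_lt idx hl.1]
      simp [ins]
    · rw [bdL, map_sub, Ins_cone_of_gt idx h, Ins_single]
      simp only [ins, h.not_gt, h.ne', if_false, map_neg, bd_cone, map_sub, cone_single,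
        ih hl.2 fun b hb => hw b (List.mem_cons_of_mem _ hb)]
      abel

theorem ins_mem {w : W} {l : List W} (hl : l.Pairwise fun a b => idx a < idx b) :
    (ins idx w l : Ch K W) ∈ supported K K
      {l' | (l'.Pairwise fun a b => idx a < idx b) ∧ l'.length = l.length + 1 ∧
        ∀ b ∈ l', b = w ∨ b ∈ l} := by
  induction l with
  | nil => exact single_mem_supported K _ (by simp)
  | cons a l ih =>
    have hl' := List.pairwise_cons.1 hl
    rcases lt_trichotomy (idx w) (idx a) with h | h | h
    · rw [ins, if_pos h]
      refine single_mem_supported K _ ⟨List.pairwise_cons.2 ⟨fun b hb => ?_, hl⟩, by simp,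
        by simp⟩
      rcases List.mem_cons.1 hb with rfl | hb
      · exact h
      · exact h.trans (hl'.1 b hb)
    · simp [ins, h]
    · simp only [ins, h.not_gt, h.ne', if_false]
      refine Submodule.neg_mem _ (map_mem_of_supported _ ?_ (ih hl'.2))
      rintro l' ⟨h1, h2, h3⟩
      rw [cone_single]
      refine single_mem_supported K _ ⟨List.pairwise_cons.2 ⟨fun b hb => ?_, h1⟩, by simp [h2],
        fun b hb => ?_⟩
      · rcases h3 b hb with rfl | hb
        · exact h
        · exact hl'.1 b hb
      · rcases List.mem_cons.1 hb with rfl | hb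
        · simp
        · rcases h3 b hb with rfl | hb
          · simp
          · simp [hb]

theorem mp_ins {g : W → W} (hg : ∀ w, idx (g w) = idx w) (w : W) (l : List W) :
    mp g (ins idx w l) = (ins idx (g w) (l.map g) : Ch K W) := by
  induction l with
  | nil => simp [ins]
  | cons a l ih =>
    simp only [ins, List.map_cons, hg]
    split_ifs
    · simp
    · simp
    · rw [map_neg, mp_cone, ih]

theorem mp_Ins {g : W → W} (hg : ∀ w, idx (g w) = idx w) (w : W) (c : Ch K W) :
    mp g (Ins idx w c) = Ins idx (g w) (mp g c) := by
  have : mp g ∘ₗ Ins idx w = (Ins idx (g w) ∘ₗ mp g : Ch K W →ₗ[K] Ch K W) := by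
    apply ext_single
    intro l
    simp [mp_ins idx hg]
  exact LinearMap.congr_fun this c

variable (rr : X → W)

/-- The image of a simplex under the map of vertices `rr`, sorted by labels. -/
noncomputable def sortL : List X → Ch K W
  | [] => single [] 1
  | x :: l => Ins idx (rr x) (sortL l)

/-- Linear extension of `sortL`. -/
noncomputable def sortMap : Ch K X →ₗ[K] Ch K W := linearCombination K (sortL idx rr)

@[simp] theorem sortMap_single (l : List X) :
    sortMap idx rr (single l (1 : K)) = sortL idx rr l := by
  simp [sortMap]

theorem sortMap_cone (x : X) (c : Ch K X) :
    sortMap idx rr (cone x c) = Ins idx (rr x) (sortMap idx rr c) := by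
  have : sortMap idx rr ∘ₗ cone x = (Ins idx (rr x) ∘ₗ sortMap idx rr : Ch K X →ₗ[K] Ch K W) := by
    apply ext_single
    intro l
    simp [sortL]
  exact LinearMap.congr_fun this c

theorem sortL_mem (l : List X) : (sortL idx rr l : Ch K W) ∈ supported K K
    {l' | (l'.Pairwise fun a b => idx a < idx b) ∧ l'.length = l.length ∧
      ∀ b ∈ l', ∃ x ∈ l, b = rr x} := by
  induction l with
  | nil => exact single_mem_supported K _ (by simp)
  | cons x l ih =>
    refine map_mem_of_supported _ ?_ ih
    rintro l' ⟨h1, h2, h3⟩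
    rw [Ins_single]
    refine supported_mono ?_ (ins_mem idx h1)
    rintro l'' ⟨h4, h5, h6⟩
    refine ⟨h4, by simp [h5, h2], fun b hb => ?_⟩
    rcases h6 b hb with rfl | hb
    · exact ⟨x, by simp⟩
    · obtain ⟨y, hy, rfl⟩ := h3 b hb
      exact ⟨y, by simp [hy]⟩

theorem sortMap_mem_hom {k : ℕ} {c : Ch K X} (hc : c ∈ hom K X k) :
    sortMap idx rr c ∈ hom K W k := by
  refine map_mem_of_supported _ (fun l hl => ?_) hc
  rw [sortMap_single]
  exact supported_mono (fun l' h => h.2.1.trans hl) (sortL_mem idx rr l)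

/-- The sorted complex vanishes in lengths greater than the number of labels. -/
theorem sortMap_eq_zero {m k : ℕ} (hm : ∀ x, idx (rr x) < m) (hk : m < k) {c : Ch K X}
    (hc : c ∈ hom K X k) : sortMap idx rr c = 0 := by
  refine eq_of_supported (sortMap idx rr) 0 (fun l hl => ?_) hc
  have hlk : l.length = k := hl
  rw [sortMap_single, LinearMap.zero_apply]
  have := sortL_mem (K := K) idx rr l
  rw [show {l' : List W | (l'.Pairwise fun a b => idx a < idx b) ∧ l'.length = l.length ∧
      ∀ b ∈ l', ∃ x ∈ l, b = rr x} = ∅ from ?_] at this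
  · simpa using this
  · refine Set.eq_empty_of_forall_notMem ?_
    rintro l' ⟨h1, h2, h3⟩
    have hnd : (l'.map idx).Nodup := by
      rw [List.Nodup, List.pairwise_map]
      exact h1.imp fun h => h.ne
    have hsub : (l'.map idx).toFinset ⊆ Finset.range m := by
      intro n hn
      simp only [List.mem_toFinset, List.mem_map] at hn
      obtain ⟨b, hb, rfl⟩ := hn
      obtain ⟨x, -, rfl⟩ := h3 b hb
      exact Finset.mem_range.2 (hm x)
    have := Finset.card_le_card hsub
    rw [List.toFinset_card_of_nodup hnd, List.length_map, Finset.card_range] at this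
    omega

/-- Sorting is a chain map on the chains that are so small that equal labels on a simplex belong to
equal vertices. -/
theorem bd_sortMap {r : X → X → Prop} (hr : ∀ x y, r x y → idx (rr x) = idx (rr y) → rr x = rr y)
    {c : Ch K X} (hc : c ∈ cl K r) : bd (sortMap idx rr c) = sortMap idx rr (bd c) := by
  refine eq_of_supported (bd ∘ₗ sortMap idx rr) (sortMap idx rr ∘ₗ bd) (fun l hl => ?_) hc
  simp only [LinearMap.comp_apply, bd_single, sortMap_single]
  induction l with
  | nil => simp [sortL, bdL]
  | cons x l ih =>
    have ih := ih fun y hy z hz => hl y (by simp [hy]) z (by simp [hz])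
    rw [bdL, map_sub, sortMap_cone, ← ih, sortL, sortMap_single]
    refine eq_of_supported (R := K) (bd ∘ₗ Ins idx (rr x)) (LinearMap.id - Ins idx (rr x) ∘ₗ bd)
      (fun l' hl' => ?_) (sortL_mem idx rr l)
    simp only [LinearMap.comp_apply, Ins_single, LinearMap.sub_apply, LinearMap.id_apply, bd_single]
    refine bd_ins idx hl'.1 fun b hb hbx => ?_
    obtain ⟨y, hy, rfl⟩ := hl'.2.2 b hb
    exact hr y x (hl y (by simp [hy]) x (by simp)) hbx

theorem mp_sortMap {g : W → W} {g' : X → X} (hg : ∀ w, idx (g w) = idx w)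
    (hgr : ∀ x, rr (g' x) = g (rr x)) (c : Ch K X) :
    sortMap idx rr (mp g' c) = mp g (sortMap idx rr c) := by
  have : sortMap idx rr ∘ₗ mp g' = (mp g ∘ₗ sortMap idx rr : Ch K X →ₗ[K] Ch K W) := by
    apply ext_single
    intro l
    simp only [LinearMap.comp_apply, mp_single, sortMap_single]
    induction l with
    | nil => simp [sortL]
    | cons x l ih => rw [List.map_cons, sortL, sortL, ih, mp_Ins idx hg, hgr]
  exact LinearMap.congr_fun this c

end Insert

section Retraction

variable {Q : Type} [AddCommGroup Q] {X : Type} [PseudoMetricSpace X] [AddAction Q X]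

theorem sim_symm {ε : ℝ} {x y : X} (h : sim Q ε x y) : sim Q ε y x := fun g => by
  rw [dist_comm]; exact h g

theorem sim_trans {ε δ : ℝ} {x y z : X} (h : sim Q ε x y) (h' : sim Q δ y z) :
    sim Q (ε + δ) x z := fun g =>
  (dist_triangle _ _ _).trans_lt (add_lt_add (h g) (h' g))

theorem sim_vadd {ε : ℝ} {x y : X} (h : sim Q ε x y) (k : Q) : sim Q ε (k +ᵥ x) (k +ᵥ y) :=
  fun g => by rw [vadd_vadd, vadd_vadd]; exact h _

theorem sim_mono {ε δ : ℝ} (hεδ : ε ≤ δ) {x y : X} (h : sim Q ε x y) : sim Q δ x y :=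
  fun g => (h g).trans_le hεδ

/-- An equivariant discretization: finitely many orbits, with labels `i`, and an equivariant map `r`
to these orbits which is locally constant on the pieces where the label is constant. -/
theorem exists_retraction {Q : Type} [AddCommGroup Q] [Finite Q] {X : Type} [MetricSpace X]
    [CompactSpace X] [AddAction Q X] (hcont : ∀ g : Q, Continuous fun x : X => g +ᵥ x) :
    ∃ (m : ℕ) (ε : ℝ) (i : X → ℕ) (r : X → X), 0 < ε ∧ (∀ y, i y < m) ∧
      (∀ (g : Q) y, i (g +ᵥ y) = i y) ∧ (∀ (g : Q) y, r (g +ᵥ y) = g +ᵥ r y) ∧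
      ∀ y y', sim Q ε y y' → i y = i y' → r y = r y' := by
  have hη : ∀ x : X, ∃ η > 0, ∀ g : Q, sim Q η x (g +ᵥ x) → g +ᵥ x = x := by
    intro x
    have hfin : (Set.range fun g : Q => g +ᵥ x).Finite := Set.finite_range _
    obtain ⟨η, hη, h⟩ := (Metric.isOpen_iff.1 (hfin.subset Set.sdiff_subset :
      ((Set.range fun g : Q => g +ᵥ x) \ {x}).Finite).isClosed.isOpen_compl) x (by simp)
    refine ⟨η, hη, fun g hg => ?_⟩
    by_contra hne
    have hx := hg 0
    rw [zero_vadd, zero_vadd, dist_comm] at hx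
    exact h (Metric.mem_ball.2 hx) ⟨⟨g, rfl⟩, hne⟩
  choose η hη0 hη using hη
  have hη' : ∀ x (g h : Q), sim Q (η x) (g +ᵥ x) (h +ᵥ x) → g +ᵥ x = h +ᵥ x := by
    intro x g h hgh
    have h1 := sim_vadd hgh (-g)
    rw [neg_vadd_vadd, vadd_vadd] at h1
    have h2 := hη x _ h1
    rw [← vadd_vadd, neg_vadd_eq_iff] at h2
    exact h2.symm
  obtain ⟨t, ht⟩ := CompactSpace.elim_nhds_subcover (fun x : X => {y | sim Q (η x / 4) x y}) (by
    intro x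
    have : {y | sim Q (η x / 4) x y} =
        ⋂ g : Q, {y | dist (g +ᵥ x) (g +ᵥ y) < η x / 4} := by
      ext y; simp [sim]
    rw [this, Filter.iInter_mem]
    intro g
    refine (isOpen_lt (continuous_const.dist (hcont g)) continuous_const).mem_nhds ?_
    simpa using hη0 x)
  let e := t.equivFin
  let P : X → ℕ → Q → Prop := fun y n g =>
    ∃ h : n < t.card, sim Q (η (e.symm ⟨n, h⟩) / 4) (g +ᵥ (e.symm ⟨n, h⟩ : X)) y
  let S : X → Set ℕ := fun y => {n | ∃ g, P y n g}
  have hS : ∀ y, (S y).Nonempty := by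
    intro y
    have hy : y ∈ ⋃ x ∈ t, {y | sim Q (η x / 4) x y} := by rw [ht]; trivial
    simp only [Set.mem_iUnion] at hy
    obtain ⟨x, hx, hxy⟩ := hy
    refine ⟨e ⟨x, hx⟩, 0, (e ⟨x, hx⟩).2, ?_⟩
    simpa using hxy
  have hP : ∀ k y n g, P y n g → P (k +ᵥ y) n (k + g) := by
    rintro k y n g ⟨h, hg⟩
    refine ⟨h, ?_⟩
    rw [← vadd_vadd]
    exact sim_vadd hg k
  have hSle : ∀ k y, S y ⊆ S (k +ᵥ y) := fun k y n ⟨g, hg⟩ => ⟨k + g, hP k y n g hg⟩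
  have hSinv : ∀ (k : Q) y, S (k +ᵥ y) = S y := fun k y =>
    Set.Subset.antisymm (by simpa using hSle (-k) (k +ᵥ y)) (hSle k y)
  have hmem : ∀ y, ∃ g, P y (sInf (S y)) g := fun y => Nat.sInf_mem (hS y)
  choose γ hγ using hmem
  have hlt : ∀ y, sInf (S y) < t.card := fun y => (hγ y).choose
  let pt : X → X := fun y => e.symm ⟨sInf (S y), hlt y⟩
  have hγ' : ∀ y, sim Q (η (pt y) / 4) (γ y +ᵥ pt y) y := fun y => (hγ y).choose_spec
  have hpt : ∀ y y', sInf (S y) = sInf (S y') → pt y = pt y' := by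
    intro y y' h
    simp only [pt, h]
  obtain ⟨ε, hε, hεt⟩ : ∃ ε > 0, ∀ x ∈ t, ε ≤ η x / 2 := by
    rcases t.eq_empty_or_nonempty with rfl | hne
    · exact ⟨1, one_pos, by simp⟩
    · obtain ⟨x, hx, h⟩ := t.exists_min_image (fun x => η x / 2) hne
      exact ⟨η x / 2, half_pos (hη0 x), h⟩
  refine ⟨t.card, ε, fun y => sInf (S y), fun y => γ y +ᵥ pt y, hε, hlt,
    fun g y => congrArg sInf (hSinv g y), fun g y => ?_, fun y y' hyy' h => ?_⟩
  · have h1 : pt (g +ᵥ y) = pt y := hpt _ _ (by rw [hSinv])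
    have h2 := hγ' (g +ᵥ y)
    rw [h1] at h2
    have h3 := sim_trans h2 (sim_symm (sim_vadd (hγ' y) g))
    rw [vadd_vadd] at h3
    simp only [h1, vadd_vadd]
    refine hη' _ _ _ (sim_mono ?_ h3)
    linarith [hη0 (pt y)]
  · have h1 : pt y' = pt y := hpt _ _ h.symm
    have h2 := hγ' y'
    simp only [h1] at h2 ⊢
    refine hη' _ _ _ (sim_mono ?_ (sim_trans (sim_trans (hγ' y) hyy') (sim_symm h2)))
    linarith [hεt (pt y) (Subtype.coe_prop _)]

end Retraction

/-! ### Towers and complexes of free modules -/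

/-- Labelled points. The group acts on the points and fixes the labels. -/
structure Labelled (X : Type) where
  /-- The label. -/
  label : ℕ
  /-- The point. -/
  pt : X

instance {Q X : Type} [AddCommGroup Q] [AddAction Q X] : AddAction Q (Labelled X) where
  vadd g w := ⟨w.label, g +ᵥ w.pt⟩
  zero_vadd w := congrArg (Labelled.mk w.label) (zero_vadd Q w.pt)
  add_vadd g h w := congrArg (Labelled.mk w.label) (add_vadd g h w.pt)

/-- A tower that is longer than the dimension of a complex of free modules cannot be mapped to it:
its last term maps to zero, and by exactness the lower terms map to boundaries, up to the image
of a power of the operator. -/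
theorem no_tower {Q : Type} [AddCommGroup Q] {W : Type} [AddAction Q W] {ι : Type} [Fintype ι]
    {K : Type} [Field K] {p : ℕ} (hp : p.Prime) [CharP K p] {u : ι → Q} (hu : ∀ i, p • u i = 0)
    {α : ι → K}
    (hχ : ∀ x : W, ∃ χ : Q →+ K, (∀ g, g +ᵥ x = x → χ g = 0) ∧ ∑ i, α i * χ (u i) ≠ 0)
    {y : ℕ → Ch K W} {j : ℕ} (hj : 1 ≤ j) (hy : IsTower p (chShift W u α) ⊤ y j) (h0 : y j = 0) :
    False := by
  set t : Module.End K (Ch K W) := chShift W u α with ht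
  have key : ∀ i, i ≤ j → 1 ≤ i → ∃ w, ∃ v ∈ hom K W i, y i = bd w + (t ^ (p - ex p i)) v := by
    intro i hi
    induction hi using Nat.decreasingInduction with
    | self => exact fun _ => ⟨0, 0, zero_mem _, by simp [h0]⟩
    | of_succ i hi ih =>
      intro h1
      obtain ⟨w, v, hv, h⟩ := ih (by omega)
      have hex : p - ex p (i + 1) = ex p i := by have := ex_add hp i; omega
      have h2 := hy.bd_succ i h1 hi
      rw [h, map_add, bd_bd, zero_add, hex, pow_comm_of_comm (T' := t) (bd_chShift u α)] at h2
      have h3 : (t ^ ex p i) (y i - bd v) = 0 := by rw [map_sub, h2, sub_self]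
      obtain ⟨w', hw', h4⟩ := chShift_exact hp hu hχ h1 (by have := ex_add hp i; omega)
        (Submodule.sub_mem _ (hy.hom i hi.le) (bd_mem_hom hv)) h3
      exact ⟨v, w', hw', by rw [← h4]; abel⟩
  obtain ⟨w, v, hv, h⟩ := key 1 hj le_rfl
  have h1 := hy.bd_one
  have hbv : t (bd v) = 0 := by
    refine eq_of_supported t 0 (fun l hl => ?_) (bd_mem_hom hv)
    obtain rfl : l = [] := by simpa using hl
    simp only [LinearMap.zero_apply, ht, chShift_empty]
  rw [h, map_add, bd_bd, zero_add, pow_comm_of_comm (T' := t) (bd_chShift u α)] at h1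
  have hp2 : p - ex p 1 = (p - 2) + 1 := by
    have := hp.two_le
    rw [show ex p 1 = 1 by simp [ex]]
    omega
  rw [hp2, pow_succ, Module.End.mul_apply, hbv, map_zero] at h1
  simpa using h1.symm

open Polynomial Polynomial.Bivariate in
/-- A space with the homology of a sphere at small scales has no action for which the
stabilizer of each point is separated by a character from every direction `α b c` other than the
origin. Sorting maps a tower that is higher than the number of labels to a tower that ends with
zero. -/
theorem not_isSpherical {Q : Type} [AddCommGroup Q] [Finite Q] {X : Type} [MetricSpace X]
    [CompactSpace X] [Nonempty X] [AddAction Q X] (hcont : ∀ g : Q, Continuous fun x : X => g +ᵥ x)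
    {ι : Type} [Fintype ι] {K : Type} [Field K] [IsAlgClosed K] {p : ℕ} (hp : p.Prime) [CharP K p]
    {u : ι → Q} (hu : ∀ i, p • u i = 0) (α : ι → K[X][Y]) (hα : ∀ i, evalEval 0 0 (α i) = 0)
    (hχ : ∀ b c : K, b ≠ 0 ∨ c ≠ 0 → ∀ x : X, ∃ χ : Q →+ K, (∀ g, g +ᵥ x = x → χ g = 0) ∧
      ∑ i, evalEval b c (α i) * χ (u i) ≠ 0) {k : ℕ} (hk : 1 ≤ k) :
    ¬ IsSpherical (sim Q (X := X)) k := by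
  intro hX
  obtain ⟨m, ε, i, r, hε, him, hi, hr, hir⟩ := exists_retraction hcont
  obtain ⟨b, c, hbc, x, hx⟩ := tower_high hk hX hp hu (CharP.cast_eq_zero K p) α hα
    (j := max k m + 1) (by omega) ε hε
  let idx : Labelled X → ℕ := Labelled.label
  let rr : X → Labelled X := fun y => ⟨i y, r y⟩
  have hcomm : ∀ c', sortMap idx rr (chShift X u (fun i => evalEval b c (α i)) c') =
      chShift (Labelled X) u (fun i => evalEval b c (α i)) (sortMap idx rr c') := by
    intro c'
    simp only [chShift_apply, map_sum, map_smul, map_sub]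
    refine Finset.sum_congr rfl fun j _ => ?_
    rw [mp_sortMap idx rr (g := (u j +ᵥ ·)) (fun w => rfl)]
    intro y
    exact congrArg₂ Labelled.mk (hi _ _) (hr _ _)
  have hbd : ∀ n ≤ max k m + 1, bd (sortMap idx rr (x n)) = sortMap idx rr (bd (x n)) := by
    intro n hn
    refine bd_sortMap idx rr (fun y y' hyy' h => ?_) (hx.mem n hn)
    exact congrArg₂ Labelled.mk h (hir y y' hyy' h)
  refine no_tower (W := Labelled X) hp hu (α := fun i => evalEval b c (α i)) ?_
    (y := fun n => sortMap idx rr (x n)) (j := max k m + 1) (by omega) ?_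
    (sortMap_eq_zero idx rr him (by omega) (hx.hom _ le_rfl))
  · intro w
    obtain ⟨χ, h1, h2⟩ := hχ b c hbc w.pt
    exact ⟨χ, fun g hg => h1 g (congrArg Labelled.pt hg), h2⟩
  · refine ⟨fun _ _ => trivial, fun n hn => sortMap_mem_hom idx rr (hx.hom n hn), ?_,
      fun n h1 h2 => ?_⟩
    · rw [hbd 1 (by omega), hx.bd_one, sortMap_single, sortL]
    · rw [hbd _ h2, hx.bd_succ n h1 h2]
      exact pow_comm_of_comm hcomm _ _

/-! ### The choice of characters -/

section Characters

variable {p : ℕ} [Fact p.Prime] {K : Type} [Field K] [Algebra (ZMod p) K]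

/-- An element `θ` which satisfies no nontrivial quadratic equation over the prime field. -/
theorem exists_theta [Infinite K] : ∃ θ : K, ∀ h : ZMod p × ZMod p × ZMod p, h ≠ 0 →
    algebraMap (ZMod p) K h.1 - θ * algebraMap (ZMod p) K h.2.1 -
      θ ^ 2 * algebraMap (ZMod p) K h.2.2 ≠ 0 := by
  classical
  open Polynomial in
  let f : ZMod p × ZMod p × ZMod p → K[X] := fun h =>
    C (algebraMap (ZMod p) K h.1) - X * C (algebraMap (ZMod p) K h.2.1) -
      X ^ 2 * C (algebraMap (ZMod p) K h.2.2)
  have hf : ∀ h, h ≠ 0 → f h ≠ 0 := by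
    intro h hh hfh
    apply hh
    have hc : ∀ n, (f h).coeff n = 0 := by simp [hfh]
    have h0 := hc 0
    have h1 := hc 1
    have h2 := hc 2
    simp [f, Polynomial.coeff_X, Polynomial.coeff_C, Polynomial.coeff_X_pow] at h0 h1 h2
    exact Prod.ext h0 (Prod.ext h1 h2)
  obtain ⟨θ, hθ⟩ := Infinite.exists_notMem_finset
    (Finset.univ.biUnion fun h => (f h).roots.toFinset)
  refine ⟨θ, fun h hh h0 => hθ ?_⟩
  simp only [Finset.mem_biUnion, Finset.mem_univ, true_and, Multiset.mem_toFinset]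
  refine ⟨h, (Polynomial.mem_roots (hf h hh)).2 ?_⟩
  rw [Polynomial.IsRoot, ← h0]
  simp [f]
  ring

/-- The character of `(ℤ/p)³` with given coefficients. -/
noncomputable def chr (K : Type) [Field K] [Algebra (ZMod p) K] (a : ZMod p × ZMod p × ZMod p) :
    ZMod p × ZMod p × ZMod p →+ K where
  toFun g := algebraMap (ZMod p) K (a.1 * g.1 + a.2.1 * g.2.1 + a.2.2 * g.2.2)
  map_zero' := by simp
  map_add' g h := by
    simp only [Prod.fst_add, Prod.snd_add, mul_add, map_add]
    ring

/-- The standard basis of `(ℤ/p)³`. -/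
def bas (p : ℕ) : Fin 3 → ZMod p × ZMod p × ZMod p := ![(1, 0, 0), (0, 1, 0), (0, 0, 1)]

/-- The point `(θ b + θ² c, b, c)` lies in no line that is defined over the prime field, unless
`b = c = 0`, and more precisely it is separated by characters from each line. -/
theorem exists_chr {θ b c : K} (hθ : ∀ h : ZMod p × ZMod p × ZMod p, h ≠ 0 →
    algebraMap (ZMod p) K h.1 - θ * algebraMap (ZMod p) K h.2.1 -
      θ ^ 2 * algebraMap (ZMod p) K h.2.2 ≠ 0) (hbc : b ≠ 0 ∨ c ≠ 0)
    {h : ZMod p × ZMod p × ZMod p} (hh : h ≠ 0) :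
    ∃ χ : ZMod p × ZMod p × ZMod p →+ K, (∀ a : ZMod p, χ (a • h) = 0) ∧
      ∑ i, ![θ * b + θ ^ 2 * c, b, c] i * χ (bas p i) ≠ 0 := by
  by_contra! hcon
  obtain ⟨h1, h2, h3⟩ := h
  have e1 := hcon (chr K (h2, -h1, 0)) fun a => by
    simp only [chr, AddMonoidHom.coe_mk, ZeroHom.coe_mk, Prod.smul_mk, smul_eq_mul]
    rw [← map_zero (algebraMap (ZMod p) K)]; congr 1; ring
  have e2 := hcon (chr K (h3, 0, -h1)) fun a => by
    simp only [chr, AddMonoidHom.coe_mk, ZeroHom.coe_mk, Prod.smul_mk, smul_eq_mul]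
    rw [← map_zero (algebraMap (ZMod p) K)]; congr 1; ring
  have e3 := hcon (chr K (0, h3, -h2)) fun a => by
    simp only [chr, AddMonoidHom.coe_mk, ZeroHom.coe_mk, Prod.smul_mk, smul_eq_mul]
    rw [← map_zero (algebraMap (ZMod p) K)]; congr 1; ring
  simp [Fin.sum_univ_three, chr, bas] at e1 e2 e3
  have h4 := hθ _ hh
  simp only at h4
  generalize algebraMap (ZMod p) K h1 = k1 at *
  generalize algebraMap (ZMod p) K h2 = k2 at *
  generalize algebraMap (ZMod p) K h3 = k3 at *
  rcases hbc with hb | hc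
  · refine mul_ne_zero hb h4 ?_
    linear_combination -e1 + θ ^ 2 * -e3
  · refine mul_ne_zero hc h4 ?_
    linear_combination -e2 + θ * e3

end Characters

/-! ### Actions on spheres -/

/-- The scales `sim` of a continuous action on a sphere are equivalent to those of the metric. -/
theorem isSpherical_sim {Q : Type} [AddCommGroup Q] [Finite Q] {n : ℕ}
    [AddAction Q (Metric.sphere (0 : EuclideanSpace ℝ (Fin (n + 1))) 1)]
    (hcont : ∀ g : Q, Continuous
      fun x : Metric.sphere (0 : EuclideanSpace ℝ (Fin (n + 1))) 1 => g +ᵥ x) :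
    IsSpherical (sim Q (X := Metric.sphere (0 : EuclideanSpace ℝ (Fin (n + 1))) 1)) (n + 1) := by
  classical
  have := Fintype.ofFinite Q
  let x₀ : Metric.sphere (0 : EuclideanSpace ℝ (Fin (n + 1))) 1 :=
    ⟨EuclideanSpace.single 0 1, by simp⟩
  refine (isSpherical_sphere (n + 1)).transfer (fun x => x.1)
    (fun v => if h : v ∈ Metric.sphere (0 : EuclideanSpace ℝ (Fin (n + 1))) 1 then ⟨v, h⟩ else x₀)
    (fun x => by simp) ?_ ?_
  · intro ε hε
    have hu : UniformContinuous fun (x : Metric.sphere (0 : EuclideanSpace ℝ (Fin (n + 1))) 1)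
        (g : Q) => g +ᵥ x :=
      CompactSpace.uniformContinuous_of_continuous (continuous_pi hcont)
    obtain ⟨δ, hδ, h⟩ := Metric.uniformContinuous_iff.1 hu ε hε
    refine ⟨δ, hδ, fun x y ⟨hx, hy, hxy⟩ g => ?_⟩
    have hx' : x ∈ Metric.sphere (0 : EuclideanSpace ℝ (Fin (n + 1))) 1 := by
      simpa using hx.2
    have hy' : y ∈ Metric.sphere (0 : EuclideanSpace ℝ (Fin (n + 1))) 1 := by
      simpa using hy.2
    simp only [hx', hy', dif_pos]
    exact (dist_pi_lt_iff hε).1 (h (a := ⟨x, hx'⟩) (b := ⟨y, hy'⟩) hxy) g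
  · intro δ hδ
    refine ⟨δ, hδ, fun x y hxy => ⟨⟨trivial, ?_⟩, ⟨trivial, ?_⟩, ?_⟩⟩
    · simp
    · simp
    · have := hxy 0
      rw [zero_vadd, zero_vadd] at this
      exact this

/-- A continuous action of `(ℤ/p)³` on a sphere has an isotropy group of rank at least two. -/
theorem exists_stabilizer_rank_two {p : ℕ} [Fact p.Prime] {n : ℕ}
    [AddAction (ZMod p × ZMod p × ZMod p) (Metric.sphere (0 : EuclideanSpace ℝ (Fin (n + 1))) 1)]
    (hcont : ∀ g : ZMod p × ZMod p × ZMod p, Continuous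
      fun x : Metric.sphere (0 : EuclideanSpace ℝ (Fin (n + 1))) 1 => g +ᵥ x) :
    ∃ x : Metric.sphere (0 : EuclideanSpace ℝ (Fin (n + 1))) 1, ∀ h : ZMod p × ZMod p × ZMod p,
      h ≠ 0 → ∃ g : ZMod p × ZMod p × ZMod p, g +ᵥ x = x ∧ ∀ a : ZMod p, g ≠ a • h := by
  by_contra! hcon
  have hp : p.Prime := Fact.out
  let K := AlgebraicClosure (ZMod p)
  obtain ⟨θ, hθ⟩ := exists_theta (p := p) (K := K)
  have : Nonempty (Metric.sphere (0 : EuclideanSpace ℝ (Fin (n + 1))) 1) :=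
    ⟨⟨EuclideanSpace.single 0 1, by simp⟩⟩
  open Polynomial Polynomial.Bivariate in
  let α : Fin 3 → K[X][Y] := ![C (C θ * X) + C (C (θ ^ 2)) * Y, C X, Y]
  have hval : ∀ b c : K, (fun i => Polynomial.evalEval b c (α i)) =
      ![θ * b + θ ^ 2 * c, b, c] := by
    intro b c
    funext i
    fin_cases i <;> simp [α, Polynomial.evalEval]
  refine not_isSpherical hcont hp (u := bas p) (K := K) ?_ α ?_ ?_ (by omega : 1 ≤ n + 1)
    (isSpherical_sim hcont)
  · intro i
    fin_cases i <;> simp [bas]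
  · intro i
    rw [show Polynomial.evalEval 0 0 (α i) = _ from congrFun (hval 0 0) i]
    fin_cases i <;> simp
  · intro b c hbc x
    obtain ⟨h, hh, hx⟩ := hcon x
    obtain ⟨χ, h1, h2⟩ := exists_chr hθ hbc hh
    refine ⟨χ, fun g hg => ?_, ?_⟩
    · obtain ⟨a, rfl⟩ := hx g hg
      exact h1 a
    · rwa [← hval] at h2

/-- Two independent elements of exponent `p` generate a group of order `p ^ 2` that is not
cyclic. -/
theorem exists_subgroup_of_independent {G : Type*} [Group G] {p : ℕ} [Fact p.Prime]
    (f : Multiplicative (ZMod p × ZMod p × ZMod p) →* G) (hf : Function.Injective f)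
    {h g : ZMod p × ZMod p × ZMod p} (hh : h ≠ 0) (hg : ∀ a : ZMod p, g ≠ a • h) :
    ∃ H : Subgroup G, Nat.card H = p ^ 2 ∧ ¬ IsCyclic H ∧
      ∀ k ∈ H, ∃ a b : ZMod p, k = f (Multiplicative.ofAdd (a • h + b • g)) := by
  have hp : p.Prime := Fact.out
  let φ : ZMod p × ZMod p →+ ZMod p × ZMod p × ZMod p :=
    { toFun := fun a => a.1 • h + a.2 • g
      map_zero' := by simp
      map_add' := fun a b => by simp only [Prod.fst_add, Prod.snd_add, add_smul]; abel }
  have hφ : Function.Injective φ := by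
    rw [injective_iff_map_eq_zero]
    rintro ⟨a, b⟩ hab
    have hab : a • h + b • g = 0 := hab
    have hb : b = 0 := by
      by_contra hb
      refine hg (-(b⁻¹ * a)) ?_
      have := congrArg (b⁻¹ • ·) hab
      simp only [smul_add, smul_smul, inv_mul_cancel₀ hb, one_smul, smul_zero] at this
      rw [neg_smul]
      exact eq_neg_of_add_eq_zero_right this
    subst hb
    rw [zero_smul, add_zero] at hab
    have ha : a = 0 := (smul_eq_zero.1 hab).resolve_right hh
    rw [ha]
    rfl
  let ψ : Multiplicative (ZMod p × ZMod p) →* G := f.comp (AddMonoidHom.toMultiplicative φ)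
  have hψ : Function.Injective ψ := hf.comp hφ
  have hcard : Nat.card ψ.range = p ^ 2 := by
    rw [← Nat.card_congr (MonoidHom.ofInjective hψ).toEquiv]
    change Nat.card (ZMod p × ZMod p) = p ^ 2
    rw [Nat.card_prod, Nat.card_zmod, sq]
  refine ⟨ψ.range, hcard, fun hcyc => ?_, ?_⟩
  · obtain ⟨⟨k, hk⟩, hgen⟩ := hcyc.exists_generator
    have ho := orderOf_eq_card_of_forall_mem_zpowers hgen
    rw [hcard] at ho
    have hkp : (⟨k, hk⟩ : ψ.range) ^ p = 1 := by
      obtain ⟨a, rfl⟩ := hk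
      refine Subtype.ext ?_
      change ψ a ^ p = 1
      rw [← map_pow, show a ^ p = 1 from ?_, map_one]
      change p • (Multiplicative.toAdd a) = 0
      ext <;> simp
    have := Nat.le_of_dvd hp.pos (orderOf_dvd_of_pow_eq_one hkp)
    rw [ho] at this
    nlinarith [hp.two_le]
  · rintro _ ⟨a, rfl⟩
    exact ⟨a.toAdd.1, a.toAdd.2, rfl⟩

end PeriodicIsotropy

/-- If a finite group `G` acts continuously on a sphere `Sⁿ` with periodic isotropy
(every subgroup of order `p²` of each point stabilizer is cyclic, for all primes `p`),
then `G` has rank at most 2: it contains no subgroup isomorphic to `(ℤ/p)³`. -/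
theorem rank_le_two_of_action_with_periodic_isotropy
    (G : Type*) [Group G] [Finite G] (n : ℕ)
    (ρ : G →* (Metric.sphere (0 : EuclideanSpace ℝ (Fin (n + 1))) 1 ≃ₜ
        Metric.sphere (0 : EuclideanSpace ℝ (Fin (n + 1))) 1))
    (hiso : ∀ x : Metric.sphere (0 : EuclideanSpace ℝ (Fin (n + 1))) 1,
      ∀ p : ℕ, p.Prime → ∀ H : Subgroup G, (∀ g ∈ H, ρ g x = x) →
        Nat.card H = p ^ 2 → IsCyclic H) :
    ∀ p : ℕ, p.Prime →
      ¬ ∃ H : Subgroup G, Nonempty (H ≃* (Multiplicative (ZMod p × ZMod p × ZMod p))) := by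
  rintro p hp ⟨E, ⟨e⟩⟩
  have : Fact p.Prime := ⟨hp⟩
  let f : Multiplicative (ZMod p × ZMod p × ZMod p) →* G := E.subtype.comp e.symm.toMonoidHom
  have hf : Function.Injective f := E.subtype_injective.comp e.symm.injective
  let _ : AddAction (ZMod p × ZMod p × ZMod p)
      (Metric.sphere (0 : EuclideanSpace ℝ (Fin (n + 1))) 1) :=
    { vadd := fun g x => ρ (f (Multiplicative.ofAdd g)) x
      zero_vadd := fun x => by
        change ρ (f 1) x = x
        rw [map_one, map_one]
        rfl
      add_vadd := fun g h x => by
        change ρ (f (Multiplicative.ofAdd g * Multiplicative.ofAdd h)) x = _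
        rw [map_mul, map_mul]
        rfl }
  have hcont : ∀ g : ZMod p × ZMod p × ZMod p, Continuous
      fun x : Metric.sphere (0 : EuclideanSpace ℝ (Fin (n + 1))) 1 => g +ᵥ x :=
    fun g => (ρ (f (Multiplicative.ofAdd g))).continuous
  obtain ⟨x, hx⟩ := PeriodicIsotropy.exists_stabilizer_rank_two hcont
  have hmul : ∀ (a : ZMod p) (g : ZMod p × ZMod p × ZMod p), g +ᵥ x = x → (a • g) +ᵥ x = x := by
    intro a g hg
    have : ∀ k : ℕ, (k • g) +ᵥ x = x := by
      intro k
      induction k with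
      | zero => simp
      | succ k ih => rw [succ_nsmul, ← vadd_vadd, hg, ih]
    rw [← ZMod.natCast_zmod_val a, Nat.cast_smul_eq_nsmul]
    exact this _
  obtain ⟨h, hhx, hh⟩ := hx (1, 0, 0) (by simp)
  have hh0 : h ≠ 0 := by simpa using hh 0
  obtain ⟨g, hgx, hg⟩ := hx h hh0
  obtain ⟨H, hH, hcyc, hHm⟩ := PeriodicIsotropy.exists_subgroup_of_independent f hf hh0 hg
  refine hcyc (hiso x p hp H (fun k hk => ?_) hH)
  obtain ⟨a, b, rfl⟩ := hHm k hk
  change (a • h + b • g) +ᵥ x = x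
  rw [← vadd_vadd, hmul b g hgx, hmul a h hhx]
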